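/- arXiv:2402.15574 — 3 statements merged into one kernel-verified Lean document; each statement's English description precedes it below -/
import Mathlib

section
/- Let (A, α, γ) be a graded C*-dynamical system, β ∈ ℝ, and ω an extremal point of the convex set of γ-invariant (α, β)-KMS states on A. Then the convex set F_β(A, α, γ, ω) of hermitian γ-twisted (α, β)-KMS functionals dominated by ω has at most two extreme points. Consequently, ω has at most two extremal KMS extensions to the crossed product A ⋊_γ ℤ₂. -/
open scoped InnerProductSpace ComplexOrder

noncomputable section

/-- A strongly continuous one-parameter group of *-automorphisms of a unital C*-algebra. -/
structure Dynamics (A : Type*) [CStarAlgebra A] where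
  α : ℝ → A ≃⋆ₐ[ℂ] A
  α_zero : ∀ a, α 0 a = a
  α_add : ∀ s t a, α (s + t) a = α s (α t a)
  α_cont : ∀ a, Continuous fun t => α t a

variable {A : Type*} [CStarAlgebra A]

/-- `f` is the entire analytic extension of `t ↦ α_t a`; an element admitting such an
extension is an entire analytic element for the dynamics. -/
def Dynamics.IsAnalyticExt (d : Dynamics A) (a : A) (f : ℂ → A) : Prop :=
  Differentiable ℂ f ∧ ∀ t : ℝ, f (t : ℂ) = d.α t a

/-- A state: positive normalized linear functional. -/
def IsState (ω : A → ℂ) : Prop :=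
  IsLinearMap ℂ ω ∧ (∀ a : A, 0 ≤ ω (star a * a)) ∧ ω 1 = 1

/-- The `(α, β)`-KMS condition: `ω (a * α_{iβ}(b)) = ω (b * a)` for entire analytic `a, b`. -/
def Dynamics.IsKMS (d : Dynamics A) (β : ℝ) (ω : A → ℂ) : Prop :=
  IsState ω ∧ ∀ a b : A, ∀ fa fb : ℂ → A, d.IsAnalyticExt a fa → d.IsAnalyticExt b fb →
    ω (a * fb (Complex.I * β)) = ω (b * a)

/-- A graded C*-dynamical system: dynamics plus a commuting involutive grading. -/
structure GradedDyn (A : Type*) [CStarAlgebra A] extends Dynamics A where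
  γ : A ≃⋆ₐ[ℂ] A
  γ_invol : ∀ a, γ (γ a) = a
  γ_comm : ∀ t a, γ (α t a) = α t (γ a)

/-- The `γ`-twisted `(α, β)`-KMS condition: `ρ (a * α_{iβ}(b)) = ρ (b * γ a)`. -/
def Dynamics.IsTwistedKMS (d : Dynamics A) (γ : A ≃⋆ₐ[ℂ] A) (β : ℝ) (ρ : A → ℂ) : Prop :=
  IsLinearMap ℂ ρ ∧ ∀ a b : A, ∀ fa fb : ℂ → A, d.IsAnalyticExt a fa → d.IsAnalyticExt b fb →
    ρ (a * fb (Complex.I * β)) = ρ (b * γ a)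

/-- Hermitian functional: `ρ(a*) = conj (ρ a)`. -/
def IsHermitian (ρ : A → ℂ) : Prop := ∀ a, ρ (star a) = starRingEnd ℂ (ρ a)

/-- `ρ` is dominated by `ω`: `|ρ(a* b)|² ≤ ω(a* a) ω(b* b)`. -/
def Dominated (ω ρ : A → ℂ) : Prop :=
  ∀ a b : A, (‖ρ (star a * b)‖ : ℂ) ^ 2 ≤ ω (star a * a) * ω (star b * b)

/-- The set `F_β(A, α, γ, ω)`: hermitian `γ`-twisted `(α,β)`-KMS functionals dominated by `ω`. -/
def TwistedKMSDom (d : Dynamics A) (γ : A ≃⋆ₐ[ℂ] A) (β : ℝ) (ω ρ : A → ℂ) : Prop :=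
  d.IsTwistedKMS γ β ρ ∧ IsHermitian ρ ∧ Dominated ω ρ

/-- Product of the `ℤ₂`-crossed product `A ⋊_γ ℤ₂` realized on `A ⊕ A`. -/
def cpMul (γ : A ≃⋆ₐ[ℂ] A) (p q : A × A) : A × A :=
  (p.1 * q.1 + p.2 * γ q.2, p.1 * q.2 + p.2 * γ q.1)

/-- Involution of the crossed product. -/
def cpStar (γ : A ≃⋆ₐ[ℂ] A) (p : A × A) : A × A := (star p.1, γ (star p.2))

/-- Unit of the crossed product. -/
def cpOne : A × A := (1, 0)

/-- A state on the crossed product. -/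
def cpIsState (γ : A ≃⋆ₐ[ℂ] A) (W : A × A → ℂ) : Prop :=
  IsLinearMap ℂ W ∧ (∀ p : A × A, 0 ≤ W (cpMul γ (cpStar γ p) p)) ∧ W (cpOne : A × A) = 1

/-- Entire analytic extension for the componentwise extended dynamics `𝛂` on `A ⊕ A`. -/
def cpIsAnalyticExt (d : Dynamics A) (p : A × A) (f : ℂ → A × A) : Prop :=
  Differentiable ℂ f ∧ ∀ t : ℝ, f (t : ℂ) = (d.α t p.1, d.α t p.2)

/-- `(𝛂, β)`-KMS states of the crossed product `A ⋊_γ ℤ₂`. -/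
def cpIsKMS (d : Dynamics A) (γ : A ≃⋆ₐ[ℂ] A) (β : ℝ) (W : A × A → ℂ) : Prop :=
  cpIsState γ W ∧ ∀ p q : A × A, ∀ fp fq : ℂ → A × A,
    cpIsAnalyticExt d p fp → cpIsAnalyticExt d q fq →
    W (cpMul γ p (fq (Complex.I * β))) = W (cpMul γ q p)


open MeasureTheory Filter Topology

def gk (n : ℝ) (z : ℂ) (t : ℝ) : ℂ :=
  (n : ℂ) * (((Real.pi : ℂ) ^ (1 / 2 : ℂ))⁻¹ * Complex.exp (-((n : ℂ) * ((t : ℂ) - z)) ^ 2))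

lemma gk_cont (n : ℝ) (z : ℂ) : Continuous (gk n z) := by
  unfold gk; fun_prop

lemma gk_int_one (n : ℝ) (hn : 0 < n) (z : ℂ) : Integrable (gk n z) ∧ ∫ t, gk n z t = 1 := by
  have hb : 0 < ((1:ℂ)).re := by simp
  have h1 := GaussianFourier.integrable_cexp_neg_mul_sq_add_real_mul_I hb (-(n * z.im))
  have h2 := GaussianFourier.integral_cexp_neg_mul_sq_add_real_mul_I hb (-(n * z.im))
  have hg : gk n z = fun t : ℝ => (n : ℂ) * (((Real.pi : ℂ) ^ (1 / 2 : ℂ))⁻¹ *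
      (fun x : ℝ => Complex.exp (-1 * ((x:ℂ) + ((-(n * z.im) : ℝ) : ℂ) * Complex.I) ^ 2))
        (n * (t - z.re))) := by
    funext t
    unfold gk
    congr 3
    conv_lhs => rw [← Complex.re_add_im z]
    push_cast
    ring
  have h3 := (h1.comp_mul_left' hn.ne').comp_sub_right z.re
  constructor
  · rw [hg]
    exact (h3.const_mul _).const_mul _
  · rw [hg, integral_const_mul, integral_const_mul]
    rw [integral_sub_right_eq_self (fun t : ℝ => (fun x : ℝ => Complex.exp (-1 * ((x:ℂ) + ((-(n * z.im) : ℝ) : ℂ) * Complex.I) ^ 2))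
        (n * t)) z.re,
      Measure.integral_comp_mul_left (fun x : ℝ => Complex.exp (-1 * ((x:ℂ) + ((-(n * z.im) : ℝ) : ℂ) * Complex.I) ^ 2)) n, h2]
    have hp : (Real.pi : ℂ) ^ (1 / 2 : ℂ) ≠ 0 := by
      rw [Complex.cpow_ne_zero_iff]; left; exact_mod_cast Real.pi_ne_zero
    rw [abs_of_pos (inv_pos.2 hn)]
    have : (n : ℂ) ≠ 0 := by exact_mod_cast hn.ne'
    simp only [Complex.real_smul, div_one]
    push_cast
    field_simp

lemma gk_norm_le (n : ℝ) (hn : 0 < n) (R : ℝ) (z : ℂ) (hz : ‖z‖ ≤ R) (t : ℝ) :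
    ‖gk n z t‖ ≤ (n * ‖((Real.pi : ℂ) ^ (1 / 2 : ℂ))⁻¹‖ * Real.exp (2 * n ^ 2 * R ^ 2)) *
      Real.exp (-(n ^ 2 / 2) * t ^ 2) := by
  unfold gk
  rw [norm_mul, norm_mul, Complex.norm_exp]
  rw [Complex.norm_real, Real.norm_of_nonneg hn.le, mul_assoc, mul_assoc, mul_assoc, ← Real.exp_add]
  gcongr
  have h1 : |z.re| ≤ R := (Complex.abs_re_le_norm z).trans hz
  have h2 : |z.im| ≤ R := (Complex.abs_im_le_norm z).trans hz
  have h3 : z.re ^ 2 ≤ R ^ 2 := sq_le_sq' (by linarith [abs_le.1 h1]) (abs_le.1 h1).2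
  have h4 : z.im ^ 2 ≤ R ^ 2 := sq_le_sq' (by linarith [abs_le.1 h2]) (abs_le.1 h2).2
  have h5 : (-((n : ℂ) * ((t : ℂ) - z)) ^ 2).re = - n ^ 2 * ((t - z.re) ^ 2 - z.im ^ 2) := by
    simp [pow_two]; ring
  rw [h5]
  have h6 : -(((t - z.re) ^ 2 - z.im ^ 2)) ≤ 2 * R ^ 2 - t ^ 2 / 2 := by
    nlinarith [sq_nonneg (t - 2 * z.re)]
  nlinarith [mul_le_mul_of_nonneg_left h6 (sq_nonneg n)]

lemma gk_hasDeriv (n : ℝ) (z : ℂ) (t : ℝ) :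
    HasDerivAt (fun z => gk n z t) (gk n z t * (2 * (n:ℂ) ^ 2 * (t - z))) z := by
  unfold gk
  have h : HasDerivAt (fun z : ℂ => -((n : ℂ) * ((t : ℂ) - z)) ^ 2) (2 * (n:ℂ) ^ 2 * (t - z)) z := by
    have := ((((hasDerivAt_id z).const_sub (t:ℂ)).const_mul (n:ℂ)).pow 2).neg
    convert! this using 1
    simp; ring
  convert! (h.cexp.const_mul (((Real.pi : ℂ) ^ (1 / 2 : ℂ))⁻¹)).const_mul (n:ℂ) using 1
  ring

lemma gk_smooth_diff {E : Type*} [NormedAddCommGroup E] [NormedSpace ℂ E]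
    (n : ℝ) (hn : 0 < n) (u : ℝ → E) (hu : Continuous u) (C : ℝ) (hC : ∀ t, ‖u t‖ ≤ C) :
    Differentiable ℂ (fun z => ∫ t, gk n z t • u t) := by
  intro z₀
  set R := ‖z₀‖ + 1 with hR
  have hC0 : 0 ≤ C := (norm_nonneg _).trans (hC 0)
  set K := (n * ‖((Real.pi : ℂ) ^ (1 / 2 : ℂ))⁻¹‖ * Real.exp (2 * n ^ 2 * R ^ 2)) with hK
  have hK0 : 0 ≤ K := by positivity
  have hR0 : 0 ≤ R := by positivity
  have hb : 0 < n ^ 2 / 2 := by positivity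
  have key := (hasDerivAt_integral_of_dominated_loc_of_deriv_le (μ := volume) (𝕜 := ℂ)
    (F := fun z t => gk n z t • u t)
    (F' := fun z t => (gk n z t * (2 * (n:ℂ) ^ 2 * (t - z))) • u t) (x₀ := z₀)
    (s := Metric.ball z₀ 1)
    (bound := fun t => (K * (2 * n ^ 2) * C) * (‖t * Real.exp (-(n ^ 2 / 2) * t ^ 2)‖ +
      R * Real.exp (-(n ^ 2 / 2) * t ^ 2)))
    (Metric.ball_mem_nhds _ one_pos) ?_ ?_ ?_ ?_ ?_ ?_).2
  · exact key.differentiableAt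
  · exact Eventually.of_forall fun z => ((gk_cont n z).smul hu).aestronglyMeasurable
  · exact (gk_int_one n hn z₀).1.smul_bdd C hu.aestronglyMeasurable (Eventually.of_forall hC)
  · have := gk_cont n z₀
    exact Continuous.aestronglyMeasurable (by fun_prop)
  · refine Eventually.of_forall fun t z hz => ?_
    have hz' : ‖z‖ ≤ R := by
      have := norm_add_le (z - z₀) z₀
      rw [Metric.mem_ball, dist_eq_norm] at hz
      simp at this; linarith
    have h1 := gk_norm_le n hn R z hz' t
    rw [norm_smul, norm_mul, norm_mul]
    have h2 : ‖(t:ℂ) - z‖ ≤ |t| + R := by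
      refine (norm_sub_le _ _).trans ?_
      simpa using hz'
    have h3 : ‖2 * (n:ℂ) ^ 2‖ = 2 * n ^ 2 := by simp
    rw [h3, norm_mul, Real.norm_eq_abs, Real.norm_of_nonneg (Real.exp_pos _).le]
    calc _ ≤ (K * Real.exp (-(n ^ 2 / 2) * t ^ 2)) * (2 * n ^ 2 * (|t| + R)) * C := by
          gcongr; exact hC t
      _ = _ := by ring
  · exact (((integrable_mul_exp_neg_mul_sq hb).norm).add
      ((integrable_exp_neg_mul_sq hb).const_mul R)).const_mul _
  · exact Eventually.of_forall fun t z _ => (gk_hasDeriv n z t).smul_const (u t)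

lemma gk_scale {E : Type*} [NormedAddCommGroup E] [NormedSpace ℂ E]
    (n : ℝ) (hn : 0 < n) (u : ℝ → E) :
    ∫ t, gk n 0 t • u t = ∫ t, gk 1 0 t • u (t / n) := by
  have : ∀ t, gk n 0 t • u t = n • (fun s => gk 1 0 s • u (s / n)) (n * t) := by
    intro t
    have hh : n * t / n = t := by field_simp
    simp only [hh]
    rw [← Complex.coe_smul, smul_smul]
    congr 1
    unfold gk
    push_cast; ring_nf
  simp_rw [this]
  rw [integral_smul, Measure.integral_comp_mul_left (fun s => gk 1 0 s • u (s / n)) n, abs_of_pos (inv_pos.2 hn), smul_smul,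
    mul_inv_cancel₀ hn.ne', one_smul]

lemma gk_tendsto {E : Type*} [NormedAddCommGroup E] [NormedSpace ℂ E] [CompleteSpace E]
    (u : ℝ → E) (hu : Continuous u) (C : ℝ) (hC : ∀ t, ‖u t‖ ≤ C) :
    Tendsto (fun n : ℕ => ∫ t, gk (n + 1 : ℝ) 0 t • u t) atTop (𝓝 (u 0)) := by
  have h1 : ∀ n : ℕ, ∫ t, gk (n + 1 : ℝ) 0 t • u t = ∫ t, gk 1 0 t • u (t / (n + 1 : ℝ)) :=
    fun n => gk_scale _ (by positivity) u
  simp_rw [h1]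
  have hi := gk_int_one 1 one_pos 0
  have : u 0 = ∫ t, gk 1 0 t • u 0 := by
    rw [integral_smul_const, hi.2, one_smul]
  rw [this]
  refine tendsto_integral_of_dominated_convergence (fun t => ‖gk 1 0 t‖ * C) ?_ ?_ ?_ ?_
  · intro n
    have := gk_cont 1 0
    exact Continuous.aestronglyMeasurable (by fun_prop)
  · exact hi.1.norm.mul_const C
  · intro n
    refine Eventually.of_forall fun t => ?_
    rw [norm_smul]
    gcongr
    exact hC _
  · refine Eventually.of_forall fun t => ?_
    refine Tendsto.const_smul ?_ _
    have h : Tendsto (fun n : ℕ => t / ((n : ℝ) + 1)) atTop (𝓝 0) := by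
      simpa [div_eq_mul_inv] using tendsto_one_div_add_atTop_nhds_zero_nat.const_mul t
    exact (hu.tendsto 0).comp h

lemma sa_norm (φ : A ≃⋆ₐ[ℂ] A) (a : A) : ‖φ a‖ = ‖a‖ :=
  StarAlgEquiv.norm_map φ a

def saL (φ : A ≃⋆ₐ[ℂ] A) : A →L[ℂ] A :=
  LinearMap.mkContinuous
    { toFun := φ, map_add' := map_add φ, map_smul' := fun c a => map_smul φ c a } 1
    (fun a => by simp [sa_norm])

@[simp] lemma saL_apply (φ : A ≃⋆ₐ[ℂ] A) (a : A) : saL φ a = φ a := rfl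

lemma sa_cont (φ : A ≃⋆ₐ[ℂ] A) : Continuous φ := (saL φ).continuous

def smear (d : Dynamics A) (n : ℝ) (c : A) (z : ℂ) : A := ∫ t, gk n z t • d.α t c

lemma smear_integrable (d : Dynamics A) (n : ℝ) (hn : 0 < n) (c : A) (z : ℂ) :
    Integrable (fun t => gk n z t • d.α t c) :=
  (gk_int_one n hn z).1.smul_bdd ‖c‖ (d.α_cont c).aestronglyMeasurable
    (Eventually.of_forall fun t => (sa_norm _ _).le)

lemma smear_ext (d : Dynamics A) (n : ℝ) (hn : 0 < n) (c : A) :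
    d.IsAnalyticExt (smear d n c 0) (smear d n c) := by
  refine ⟨gk_smooth_diff n hn _ (d.α_cont c) ‖c‖ (fun t => (sa_norm _ _).le), fun s => ?_⟩
  unfold smear
  have h := (saL (d.α s)).integral_comp_comm (smear_integrable d n hn c 0)
  simp only [saL_apply] at h
  rw [← h]
  rw [← integral_sub_right_eq_self (fun t => d.α s (gk n 0 t • d.α t c)) s]
  refine integral_congr_ae (Eventually.of_forall fun t => ?_)
  simp only [map_smul, ← d.α_add]
  congr 1
  · unfold gk; push_cast; ring_nf
  · congr 1; ring_nf

lemma smear_tendsto (d : Dynamics A) (c : A) :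
    Tendsto (fun n : ℕ => smear d (n + 1 : ℝ) c 0) atTop (𝓝 c) := by
  have := gk_tendsto (fun t => d.α t c) (d.α_cont c) ‖c‖ (fun t => (sa_norm _ _).le)
  simpa [smear, d.α_zero] using this

namespace Dynamics.IsAnalyticExt

lemma zero {d : Dynamics A} {a : A} {f : ℂ → A} (h : d.IsAnalyticExt a f) : f 0 = a := by
  have := h.2 0
  simpa [d.α_zero] using this

lemma entire_eq {f g : ℂ → A} (hf : Differentiable ℂ f) (hg : Differentiable ℂ g)
    (h : ∀ t : ℝ, f t = g t) : f = g := by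
  have hf' : AnalyticOnNhd ℂ f Set.univ := fun z _ => hf.analyticAt z
  have hg' : AnalyticOnNhd ℂ g Set.univ := fun z _ => hg.analyticAt z
  refine hf'.eq_of_frequently_eq (z₀ := 0) hg' ?_
  have ht : Tendsto (fun n : ℕ => ((1 / ((n : ℝ) + 1) : ℝ) : ℂ)) atTop (𝓝[≠] 0) := by
    rw [tendsto_nhdsWithin_iff]
    constructor
    · have := (Complex.continuous_ofReal.tendsto 0).comp tendsto_one_div_add_atTop_nhds_zero_nat
      simpa [Function.comp_def] using this
    · refine Eventually.of_forall fun n => ?_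
      simp only [Set.mem_compl_iff, Set.mem_singleton_iff, Complex.ofReal_eq_zero]
      positivity
  exact ht.frequently (Frequently.of_forall fun n => h _)

lemma shift {d : Dynamics A} {a : A} {f : ℂ → A} (h : d.IsAnalyticExt a f) (w : ℂ) :
    d.IsAnalyticExt (f w) (fun z => f (w + z)) := by
  refine ⟨h.1.comp (by fun_prop), fun t => ?_⟩
  have : (fun w : ℂ => f (w + t)) = fun w => saL (d.α t) (f w) := by
    refine entire_eq (h.1.comp (by fun_prop)) ((saL (d.α t)).differentiable.comp h.1) fun s => ?_
    have := h.2 (s + t)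
    push_cast at this
    rw [this, saL_apply, h.2, add_comm, d.α_add]
  exact congrFun this w

lemma mul {d : Dynamics A} {a b : A} {f g : ℂ → A} (h : d.IsAnalyticExt a f)
    (h' : d.IsAnalyticExt b g) : d.IsAnalyticExt (a * b) (fun z => f z * g z) :=
  ⟨h.1.mul h'.1, fun t => by simp only [h.2, h'.2, map_mul]⟩

lemma star {d : Dynamics A} {a : A} {f : ℂ → A} (h : d.IsAnalyticExt a f) :
    d.IsAnalyticExt (star a) (fun z => star (f (starRingEnd ℂ z))) := by
  refine ⟨fun z => ?_, fun t => by simp [h.2, map_star]⟩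
  have := (h.1 (starRingEnd ℂ z)).star_conj
  simpa [Function.comp_def] using this

lemma one {d : Dynamics A} : d.IsAnalyticExt 1 (fun _ => 1) :=
  ⟨by fun_prop, fun t => by simp⟩

lemma gam {S : GradedDyn A} {a : A} {f : ℂ → A} (h : S.toDynamics.IsAnalyticExt a f) :
    S.toDynamics.IsAnalyticExt (S.γ a) (fun z => S.γ (f z)) :=
  ⟨(saL S.γ).differentiable.comp h.1, fun t => by simp only [h.2, S.γ_comm]⟩

end Dynamics.IsAnalyticExt

lemma eq_of_analytic (d : Dynamics A) {X : Type*} [TopologicalSpace X] [T2Space X]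
    {u v : A → X} (hu : Continuous u) (hv : Continuous v)
    (h : ∀ a f, d.IsAnalyticExt a f → u a = v a) : u = v := by
  funext a
  have h1 := (hu.tendsto a).comp (smear_tendsto d a)
  have h2 := (hv.tendsto a).comp (smear_tendsto d a)
  refine tendsto_nhds_unique h1 (h2.congr fun n => ?_)
  exact (h _ _ (smear_ext d _ (by positivity) a)).symm

/-- norm along imaginary direction and invariance from periodicity -/
lemma invariant_of_periodic (d : Dynamics A) (β : ℝ) (hβ : β ≠ 0) (φ : A →L[ℂ] ℂ)
    (h : ∀ b f, d.IsAnalyticExt b f → φ (f (Complex.I * β)) = φ b) (t : ℝ) (b : A) :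
    φ (d.α t b) = φ b := by
  have : (fun b => φ (d.α t b)) = fun b => φ b := by
    refine eq_of_analytic d (φ.continuous.comp (sa_cont _)) φ.continuous fun b f hf => ?_
    have hd : Differentiable ℂ (fun z => φ (f z)) := φ.differentiable.comp hf.1
    have hper : ∀ z, φ (f (z + Complex.I * β)) = φ (f z) := fun z => h _ _ (hf.shift z)
    have hnorm : ∀ z : ℂ, ‖f z‖ = ‖f (Complex.I * z.im)‖ := by
      intro z
      have := (hf.shift (Complex.I * z.im)).2 z.re
      have e : Complex.I * z.im + z.re = z := by
        rw [add_comm, mul_comm]; exact Complex.re_add_im z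
      simp only [e] at this
      rw [this, sa_norm]
    have hc : Continuous (fun s : ℝ => ‖f (Complex.I * s)‖) := by
      have := hf.1.continuous
      fun_prop
    obtain ⟨M, hM⟩ := (isCompact_Icc (a := -|β|) (b := |β|)).exists_bound_of_continuousOn
      hc.continuousOn
    have hperZ : ∀ (n : ℤ) z, φ (f (z - n * (Complex.I * β))) = φ (f z) := by
      have hp : Function.Periodic (fun z => φ (f z)) (Complex.I * β) := hper
      intro n z
      exact hp.sub_int_mul_eq n
    have hbd : Bornology.IsBounded (Set.range fun z => φ (f z)) := by
      rw [isBounded_iff_forall_norm_le]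
      refine ⟨‖φ‖ * M, ?_⟩
      rintro _ ⟨z, rfl⟩
      simp only
      rw [← hperZ (⌊z.im / β⌋) z]
      refine (φ.le_opNorm _).trans ?_
      gcongr
      rw [hnorm]
      have him : (z - (⌊z.im / β⌋ : ℂ) * (Complex.I * β)).im = Int.fract (z.im / β) * β := by
        have : Int.fract (z.im / β) * β = z.im - ⌊z.im / β⌋ * β := by
          rw [Int.fract]; field_simp
        rw [this]; simp
      have h3 := hM (Int.fract (z.im / β) * β) (by
        rw [Set.mem_Icc, ← abs_le, abs_mul, abs_of_nonneg (Int.fract_nonneg _)]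
        have := (Int.fract_lt_one (z.im / β)).le
        nlinarith [abs_nonneg β])
      rw [him]
      simpa using h3
    have := hd.apply_eq_apply_of_bounded hbd (t : ℂ) 0
    rwa [hf.2, hf.zero] at this
  exact congrFun this b

structure IsGNS {H : Type*} [NormedAddCommGroup H] [InnerProductSpace ℂ H]
    (ω : A → ℂ) (L : A →L[ℂ] H) (p : A → H →L[ℂ] H) : Prop where
  inner_eq : ∀ a b, ⟪L a, L b⟫_ℂ = ω (star a * b)
  dense : DenseRange L
  act : ∀ a b, p a (L b) = L (a * b)
  adj : ∀ a x y, ⟪p a x, y⟫_ℂ = ⟪x, p (star a) y⟫_ℂ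

lemma exists_gns.{u} {A : Type u} [CStarAlgebra A] (ω : A → ℂ) (hω : IsState ω) :
    ∃ (H : Type u) (_ : NormedAddCommGroup H) (_ : InnerProductSpace ℂ H) (_ : CompleteSpace H)
      (L : A →L[ℂ] H) (p : A → H →L[ℂ] H), IsGNS ω L p := by
  let _ := CStarAlgebra.spectralOrder A
  have _ := CStarAlgebra.spectralOrderedRing A
  let f : A →ₚ[ℂ] ℂ := PositiveLinearMap.mk₀ (hω.1.mk' ω) (fun x hx => by
    obtain ⟨s, rfl⟩ := CStarAlgebra.nonneg_iff_eq_star_mul_self.1 hx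
    exact hω.2.1 s)
  have hf : ∀ a, f a = ω a := fun a => rfl
  let L0 : A →ₗ[ℂ] f.GNS :=
    (UniformSpace.Completion.toComplₗᵢ (𝕜 := ℂ) (E := f.PreGNS)).toLinearMap ∘ₗ
      f.toPreGNS.toLinearMap
  have hL0 : ∀ a, L0 a = ((f.toPreGNS a : f.PreGNS) : f.GNS) := fun a => rfl
  have hact : ∀ a b, f.gnsStarAlgHom a (L0 b) = L0 (a * b) := by
    intro a b
    rw [hL0, hL0]
    simp
  have hb : ∀ a, ‖L0 a‖ ≤ ‖L0 1‖ * ‖a‖ := by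
    intro a
    have := hact a 1
    rw [mul_one] at this
    rw [← this, mul_comm]
    refine ((f.gnsStarAlgHom a).le_opNorm _).trans ?_
    gcongr
    exact NonUnitalStarAlgHom.norm_apply_le f.gnsStarAlgHom a
  refine ⟨f.GNS, inferInstance, inferInstance, inferInstance, L0.mkContinuous _ hb,
    fun a => f.gnsStarAlgHom a, ?_, ?_, ?_, ?_⟩
  · intro a b
    simp only [LinearMap.mkContinuous_apply, hL0]
    rw [UniformSpace.Completion.inner_coe, PositiveLinearMap.preGNS_inner_def]
    exact hf _
  · exact (UniformSpace.Completion.denseRange_coe (α := f.PreGNS))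
  · exact hact
  · intro a x y
    rw [map_star, ContinuousLinearMap.star_eq_adjoint, ContinuousLinearMap.adjoint_inner_right]

section main
variable {H : Type*} [NormedAddCommGroup H] [InnerProductSpace ℂ H]
  {ω : A → ℂ} {L : A →L[ℂ] H} {p : A → H →L[ℂ] H}

lemma IsGNS.omega_eq (G : IsGNS ω L p) (a : A) : ω a = ⟪L 1, L a⟫_ℂ := by
  rw [G.inner_eq]; simp

lemma IsGNS.omega_cont (G : IsGNS ω L p) : Continuous ω := by
  have : ω = fun a => ⟪L 1, L a⟫_ℂ := funext G.omega_eq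
  rw [this]; fun_prop

lemma IsGNS.sq (G : IsGNS ω L p) (a : A) : ω (star a * a) = ((‖L a‖ ^ 2 : ℝ) : ℂ) := by
  rw [← G.inner_eq, inner_self_eq_norm_sq_to_K]; simp

lemma IsGNS.mul (G : IsGNS ω L p) (a b : A) : p (a * b) = (p a).comp (p b) := by
  ext x
  refine congrFun (f := fun x => p (a * b) x) (g := fun x => p a (p b x)) ?_ x
  refine G.dense.equalizer (by fun_prop) (by fun_prop) ?_
  funext c
  simp [G.act, mul_assoc]

lemma IsGNS.lin (G : IsGNS ω L p) (x : H) :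
    (∀ a b, p (a + b) x = p a x + p b x) ∧ (∀ (c : ℂ) a, p (c • a) x = c • p a x) := by
  constructor
  · intro a b
    refine congrFun (f := fun x => p (a + b) x) (g := fun x => p a x + p b x) ?_ x
    refine G.dense.equalizer (by fun_prop) (by fun_prop) ?_
    funext c
    simp [G.act, add_mul]
  · intro k a
    refine congrFun (f := fun x => p (k • a) x) (g := fun x => k • p a x) ?_ x
    refine G.dense.equalizer (by fun_prop) (by fun_prop) ?_
    funext c
    simp [G.act]

lemma IsGNS.one (G : IsGNS ω L p) (x : H) : p 1 x = x := by
  refine congrFun (f := fun x => p 1 x) (g := fun x => x) ?_ x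
  refine G.dense.equalizer (by fun_prop) (by fun_prop) ?_
  funext c
  simp [G.act]

lemma IsGNS.adj' (G : IsGNS ω L p) (a : A) (x y : H) : ⟪x, p a y⟫_ℂ = ⟪p (star a) x, y⟫_ℂ := by
  rw [G.adj, star_star]

lemma IsGNS.kms (G : IsGNS ω L p) {d : Dynamics A} {β : ℝ} (hK : d.IsKMS β ω) (X b : A)
    (f : ℂ → A) (hf : d.IsAnalyticExt b f) : ω (X * f (Complex.I * β)) = ω (b * X) := by
  have hc := G.omega_cont
  exact congrFun (eq_of_analytic d (u := fun X => ω (X * f (Complex.I * β)))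
    (v := fun X => ω (b * X)) (by fun_prop) (by fun_prop)
    fun a fa ha => hK.2 a b fa f ha hf) X

lemma pow_bound {P : ℕ → ℝ} {C M : ℝ} (hP : ∀ k, 0 ≤ P k) (hM : 0 ≤ M)
    (h : ∀ k, P k ^ 2 ≤ P 0 * P (2 * k)) (hC : ∀ k, P k ≤ C * M ^ k) : P 1 ≤ M * P 0 := by
  by_contra hcon
  push Not at hcon
  have h0 : 0 < P 0 := by
    rcases (hP 0).lt_or_eq with h0 | h0
    · exact h0
    · exfalso
      have := h 1
      rw [← h0] at this hcon
      simp at hcon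
      nlinarith
  have ind : ∀ n : ℕ, (P 1 / P 0) ^ (2 ^ n) ≤ P (2 ^ n) / P 0 := by
    intro n
    induction n with
    | zero => simp
    | succ n ih =>
      have h1 := h (2 ^ n)
      rw [pow_succ, pow_mul]
      calc ((P 1 / P 0) ^ 2 ^ n) ^ 2 ≤ (P (2 ^ n) / P 0) ^ 2 := by
            have : 0 ≤ (P 1 / P 0) ^ 2 ^ n := pow_nonneg (div_nonneg (hP 1) h0.le) _
            gcongr
        _ = P (2 ^ n) ^ 2 / P 0 ^ 2 := by rw [div_pow]
        _ ≤ (P 0 * P (2 * 2 ^ n)) / P 0 ^ 2 := by gcongr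
        _ = _ := by rw [mul_comm 2 (2 ^ n)]; field_simp
  set r := P 1 / P 0 with hr
  have hrM : M < r := by rw [hr, lt_div_iff₀ h0]; exact hcon
  have hr0 : 0 < r := lt_of_le_of_lt hM hrM
  have hlt : M / r < 1 := (div_lt_one hr0).2 hrM
  have ht : Tendsto (fun n : ℕ => (C / P 0) * (M / r) ^ (2 ^ n)) atTop (𝓝 0) := by
    have h1 := (tendsto_pow_atTop_nhds_zero_of_lt_one (div_nonneg hM hr0.le) hlt).comp
      (tendsto_pow_atTop_atTop_of_one_lt (r := 2) (by norm_num))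
    simpa [Function.comp_def] using h1.const_mul (C / P 0)
  have hge : ∀ n : ℕ, 1 ≤ (C / P 0) * (M / r) ^ (2 ^ n) := by
    intro n
    have h2 : r ^ (2 ^ n) ≤ C * M ^ (2 ^ n) / P 0 :=
      (ind n).trans (by gcongr; exact hC _)
    rw [div_pow]
    have h3 : 0 < r ^ (2 ^ n) := pow_pos hr0 _
    rw [← mul_div_assoc, le_div_iff₀ h3, one_mul]
    calc _ ≤ _ := h2
      _ = _ := by ring
  have := ge_of_tendsto' ht hge
  linarith

lemma IsGNS.rightMul (G : IsGNS ω L p) {d : Dynamics A} {β : ℝ} (hK : d.IsKMS β ω) (a : A)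
    (f : ℂ → A) (hf : d.IsAnalyticExt a f) : ∃ K : ℝ, 0 ≤ K ∧ ∀ c, ‖L (c * a)‖ ≤ K * ‖L c‖ := by
  set w : A := f (-(Complex.I * β)) with hw
  have hconj : starRingEnd ℂ (Complex.I * β) = -(Complex.I * β) := by simp
  have k1 : ∀ X, ω (star a * X) = ω (X * star w) := by
    intro X
    have := G.kms hK X _ _ hf.star
    rw [← this, hconj]
  set e : A := a * star w with he
  have k2 : ∀ X, ω (star e * X) = ω (X * e) := by
    intro X
    have h := (hf.shift (-(Complex.I * β))).mul hf.star
    have := G.kms hK X _ _ h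
    simp only [hconj, neg_add_cancel, hf.zero] at this
    rw [he, star_mul, star_star, ← this]
  have hself : ∀ c, ‖L (c * a)‖ ^ 2 ≤ ‖L c‖ * ‖L (c * e)‖ := by
    intro c
    have h1 : ((‖L (c * a)‖ ^ 2 : ℝ) : ℂ) = ⟪L c, L (c * e)⟫_ℂ := by
      rw [← G.sq, G.inner_eq, star_mul, mul_assoc, k1, he]
      simp only [mul_assoc]
    have h2 := norm_inner_le_norm (𝕜 := ℂ) (L c) (L (c * e))
    rw [← h1] at h2
    rw [Complex.norm_real, Real.norm_of_nonneg (by positivity)] at h2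
    exact h2
  have hstar : ∀ (k : ℕ) X, ω (star (e ^ k) * X) = ω (X * e ^ k) := by
    intro k
    induction k with
    | zero => simp
    | succ k ih =>
      intro X
      rw [pow_succ, star_mul, mul_assoc, k2, mul_assoc, ih, mul_assoc, ← pow_succ', ← pow_succ]
  have hpow : ∀ c, ∀ k : ℕ, ‖L (c * e ^ k)‖ ^ 2 ≤ ‖L (c * e ^ 0)‖ * ‖L (c * e ^ (2 * k))‖ := by
    intro c k
    have h1 : ((‖L (c * e ^ k)‖ ^ 2 : ℝ) : ℂ) = ⟪L c, L (c * e ^ (2 * k))⟫_ℂ := by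
      rw [← G.sq, G.inner_eq, star_mul, mul_assoc, hstar, two_mul, pow_add]
      simp only [mul_assoc]
    have h2 := norm_inner_le_norm (𝕜 := ℂ) (L c) (L (c * e ^ (2 * k)))
    rw [← h1] at h2
    rw [Complex.norm_real, Real.norm_of_nonneg (by positivity)] at h2
    simpa using h2
  have hgrow : ∀ c, ∀ k : ℕ, ‖L (c * e ^ k)‖ ≤ (‖L‖ * ‖c‖ * ‖(1 : A)‖) * ‖e‖ ^ k := by
    intro c k
    refine (L.le_opNorm _).trans ?_
    rw [mul_assoc, mul_assoc]
    gcongr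
    refine (norm_mul_le _ _).trans ?_
    gcongr
    induction k with
    | zero => simp
    | succ k ih =>
      rw [pow_succ e k, pow_succ ‖e‖ k, ← mul_assoc ‖(1 : A)‖]
      refine (norm_mul_le _ _).trans ?_
      gcongr
  have hfin : ∀ c, ‖L (c * e)‖ ≤ ‖e‖ * ‖L c‖ := by
    intro c
    have := pow_bound (P := fun k => ‖L (c * e ^ k)‖) (fun k => norm_nonneg _) (norm_nonneg e)
      (hpow c) (hgrow c)
    simpa using this
  refine ⟨√‖e‖, Real.sqrt_nonneg _, fun c => ?_⟩
  refine (sq_le_sq₀ (norm_nonneg _) (by positivity)).1 ?_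
  rw [mul_pow, Real.sq_sqrt (norm_nonneg _)]
  calc _ ≤ _ := hself c
    _ ≤ ‖L c‖ * (‖e‖ * ‖L c‖) := by gcongr; exact hfin c
    _ = _ := by ring
end main

section main2
variable {H : Type*} [NormedAddCommGroup H] [InnerProductSpace ℂ H]
  {ω : A → ℂ} {L : A →L[ℂ] H} {p : A → H →L[ℂ] H}

structure TwVec (S : GradedDyn A) (β : ℝ) (L : A →L[ℂ] H) (p : A → H →L[ℂ] H)
    (ρ : A → ℂ) (ξ : H) : Prop where
  rep : ∀ a, ρ a = ⟪ξ, L a⟫_ℂ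
  herm : ∀ a, ρ (star a) = starRingEnd ℂ (ρ a)
  tw : ∀ X b f, S.toDynamics.IsAnalyticExt b f → ρ (X * f (Complex.I * β)) = ρ (b * S.γ X)
  inv : ∀ a, ρ (S.γ a) = ρ a
  bd : ∀ a, ‖p a ξ‖ ≤ ‖L a‖

lemma dom_norm (G : IsGNS ω L p) {ρ : A → ℂ} (hd : Dominated ω ρ) (a b : A) :
    ‖ρ (star a * b)‖ ≤ ‖L a‖ * ‖L b‖ := by
  have h := hd a b
  rw [G.sq, G.sq] at h
  norm_cast at h
  rw [← mul_pow] at h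
  exact (sq_le_sq₀ (norm_nonneg _) (by positivity)).1 h

lemma dom_cont (G : IsGNS ω L p) {ρ : A → ℂ} (hl : IsLinearMap ℂ ρ) (hd : Dominated ω ρ) :
    Continuous ρ := by
  have : ∀ a, ‖hl.mk' ρ a‖ ≤ (‖L 1‖ * ‖L‖) * ‖a‖ := by
    intro a
    have h := dom_norm G hd 1 a
    simp only [star_one, one_mul] at h
    refine h.trans ?_
    rw [mul_assoc]
    gcongr
    exact L.le_opNorm a
  exact ((hl.mk' ρ).mkContinuous _ this).continuous

lemma exists_twVec [CompleteSpace H] (G : IsGNS ω L p) {S : GradedDyn A} {β : ℝ} {ρ : A → ℂ}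
    (h : TwistedKMSDom S.toDynamics S.γ β ω ρ) : ∃ ξ, TwVec S β L p ρ ξ := by
  obtain ⟨⟨hl, ht⟩, hh, hd⟩ := h
  have hcont := dom_cont G hl hd
  have hb : ∃ C, ∀ a, ‖hl.mk' ρ a‖ ≤ C * ‖L.toLinearMap a‖ := by
    refine ⟨‖L 1‖, fun a => ?_⟩
    have h := dom_norm G hd 1 a
    simpa using h
  let φ : H →L[ℂ] ℂ := (hl.mk' ρ).extendOfNorm L.toLinearMap
  have hφ : ∀ a, φ (L a) = ρ a := fun a =>
    LinearMap.extendOfNorm_eq (f := hl.mk' ρ) (e := L.toLinearMap) G.dense hb a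
  let ξ := (InnerProductSpace.toDual ℂ H).symm φ
  have hξ : ∀ x, ⟪ξ, x⟫_ℂ = φ x := fun x => InnerProductSpace.toDual_symm_apply
  have rep : ∀ a, ρ a = ⟪ξ, L a⟫_ℂ := fun a => by rw [hξ, hφ]
  have hγc := sa_cont S.γ
  have tw : ∀ X b f, S.toDynamics.IsAnalyticExt b f →
      ρ (X * f (Complex.I * β)) = ρ (b * S.γ X) := by
    intro X b f hf
    exact congrFun (eq_of_analytic S.toDynamics (u := fun X => ρ (X * f (Complex.I * β)))
      (v := fun X => ρ (b * S.γ X)) (by fun_prop) (by fun_prop)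
      fun a fa ha => ht a b fa f ha hf) X
  refine ⟨ξ, rep, hh, tw, fun a => ?_, fun a => ?_⟩
  · have := tw a 1 _ Dynamics.IsAnalyticExt.one
    simpa using this.symm
  · have key : ∀ x, ‖⟪p a ξ, x⟫_ℂ‖ ≤ ‖L a‖ * ‖x‖ := by
      intro x
      refine G.dense.induction_on (p := fun x => ‖⟪p a ξ, x⟫_ℂ‖ ≤ ‖L a‖ * ‖x‖) x
        (isClosed_le (by fun_prop) (by fun_prop)) fun b => ?_
      rw [G.adj, G.act, ← rep]
      exact dom_norm G hd a b
    have := key (p a ξ)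
    rw [inner_self_eq_norm_sq_to_K] at this
    simp only [Complex.coe_algebraMap, norm_pow, Complex.norm_real, norm_norm] at this
    rcases (norm_nonneg (p a ξ)).lt_or_eq with h0 | h0
    · nlinarith
    · rw [← h0]; positivity

lemma gns_norm_inv (G : IsGNS ω L p) {ρ : A → ℂ} {ξ : H} (rep : ∀ a, ρ a = ⟪ξ, L a⟫_ℂ)
    (φ : A ≃⋆ₐ[ℂ] A) (h1 : ∀ a, ω (φ a) = ω a) (h2 : ∀ a, ρ (φ a) = ρ a) (c : A) :
    ‖L (φ c) - ξ‖ = ‖L c - ξ‖ := by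
  have h3 : ‖L (φ c)‖ = ‖L c‖ := by
    have := G.sq (φ c)
    rw [← map_star, ← map_mul, h1, G.sq] at this
    have h4 : ‖L c‖ ^ 2 = ‖L (φ c)‖ ^ 2 := by exact_mod_cast this
    exact ((sq_eq_sq₀ (norm_nonneg _) (norm_nonneg _)).1 h4).symm
  have h5 : ⟪ξ, L (φ c)⟫_ℂ = ⟪ξ, L c⟫_ℂ := by rw [← rep, ← rep, h2]
  have e1 := norm_sub_sq (𝕜 := ℂ) ξ (L (φ c))
  have e2 := norm_sub_sq (𝕜 := ℂ) ξ (L c)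
  rw [h5, h3, ← e2] at e1
  rw [norm_sub_rev, norm_sub_rev (L c)]
  exact (sq_eq_sq₀ (norm_nonneg _) (norm_nonneg _)).1 e1

lemma analytic_seq (G : IsGNS ω L p) (d : Dynamics A) (ξ : H) :
    ∃ (c : ℕ → A) (F : ℕ → ℂ → A), (∀ n, d.IsAnalyticExt (c n) (F n)) ∧
      Tendsto (fun n => L (c n)) atTop (𝓝 ξ) := by
  have hmem : ξ ∈ closure {x | ∃ c f, d.IsAnalyticExt c f ∧ L c = x} := by
    refine G.dense.induction_on (p := fun x => x ∈ closure {x | ∃ c f, d.IsAnalyticExt c f ∧ L c = x})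
      ξ isClosed_closure fun a => ?_
    refine mem_closure_of_tendsto ((L.continuous.tendsto a).comp (smear_tendsto d a)) ?_
    exact Eventually.of_forall fun n => ⟨_, _, smear_ext d _ (by positivity) a, rfl⟩
  obtain ⟨x, hx, hlim⟩ := mem_closure_iff_seq_limit.1 hmem
  choose c F hF hc using hx
  refine ⟨c, F, hF, ?_⟩
  simpa only [hc] using hlim

lemma approx [CompleteSpace H] (G : IsGNS ω L p) {S : GradedDyn A} {β : ℝ}
    (hK : S.toDynamics.IsKMS β ω) {ρ : A → ℂ} {ξ : H} (T : TwVec S β L p ρ ξ) :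
    ∃ F : ℕ → ℂ → A, (∀ n, S.toDynamics.IsAnalyticExt (F n 0) (F n)) ∧
      Tendsto (fun n => L (F n 0)) atTop (𝓝 ξ) ∧
      Tendsto (fun n => L (F n (Complex.I * β))) atTop (𝓝 ξ) := by
  obtain ⟨c, F, hF, hc⟩ := analytic_seq G S.toDynamics ξ
  by_cases hβ : β = 0
  · subst hβ
    have h0 : ∀ n, F n 0 = c n := fun n => (hF n).zero
    refine ⟨F, fun n => by rw [h0]; exact hF n, ?_, ?_⟩
    · simpa only [h0] using hc
    · simpa only [Complex.ofReal_zero, mul_zero, h0] using hc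
  · have inv1 : ∀ t a, ω (S.α t a) = ω a := by
      intro t a
      have := invariant_of_periodic S.toDynamics β hβ ((innerSL ℂ (L 1)).comp L) (fun b f hf => by
        have := G.kms hK 1 b f hf
        simpa [G.omega_eq] using this) t a
      simpa [G.omega_eq] using this
    have inv2 : ∀ t a, ρ (S.α t a) = ρ a := by
      intro t a
      have := invariant_of_periodic S.toDynamics β hβ ((innerSL ℂ ξ).comp L) (fun b f hf => by
        have := T.tw 1 b f hf
        simpa [T.rep] using this) t a
      simpa [T.rep] using this
    have hnorm : ∀ c t, ‖L (S.α t c) - ξ‖ = ‖L c - ξ‖ := fun c t =>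
      gns_norm_inv G T.rep (S.α t) (inv1 t) (inv2 t) c
    have hlim : ∀ z, Tendsto (fun n => L (smear S.toDynamics 1 (c n) z)) atTop (𝓝 ξ) := by
      intro z
      rw [tendsto_iff_norm_sub_tendsto_zero]
      have hg := gk_int_one 1 one_pos z
      have hle : ∀ n, ‖L (smear S.toDynamics 1 (c n) z) - ξ‖ ≤
          (∫ t, ‖gk 1 z t‖) * ‖L (c n) - ξ‖ := by
        intro n
        have h1 : L (smear S.toDynamics 1 (c n) z) = ∫ t, gk 1 z t • L (S.α t (c n)) := by
          unfold smear
          rw [← L.integral_comp_comm (smear_integrable _ 1 one_pos _ _)]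
          simp
        have h2 : ξ = ∫ t, gk 1 z t • ξ := by rw [integral_smul_const, hg.2, one_smul]
        have i1 : Integrable (fun t => gk 1 z t • L (S.α t (c n))) := by
          have := L.integrable_comp (smear_integrable S.toDynamics 1 one_pos (c n) z)
          simpa using this
        have h3 : L (smear S.toDynamics 1 (c n) z) - ξ =
            ∫ t, gk 1 z t • (L (S.α t (c n)) - ξ) := by
          conv_lhs => rw [h1, h2]
          rw [← integral_sub i1 (hg.1.smul_const ξ)]
          simp only [smul_sub]
        rw [h3]
        refine (norm_integral_le_integral_norm _).trans ?_
        simp only [norm_smul, hnorm]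
        rw [integral_mul_const]
      refine squeeze_zero (fun n => norm_nonneg _) hle ?_
      have := (tendsto_iff_norm_sub_tendsto_zero.1 hc).const_mul (∫ t, ‖gk 1 z t‖)
      simpa using this
    exact ⟨fun n => smear S.toDynamics 1 (c n), fun n => smear_ext _ 1 one_pos _, hlim 0, hlim _⟩

lemma conv_right [CompleteSpace H] (G : IsGNS ω L p) {S : GradedDyn A} {β : ℝ}
    (hK : S.toDynamics.IsKMS β ω) {ρ : A → ℂ} {ξ : H} (T : TwVec S β L p ρ ξ)
    {F : ℕ → ℂ → A} (hF : ∀ n, S.toDynamics.IsAnalyticExt (F n 0) (F n))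
    (h0 : Tendsto (fun n => L (F n 0)) atTop (𝓝 ξ))
    (h1 : Tendsto (fun n => L (F n (Complex.I * β))) atTop (𝓝 ξ))
    (a : A) (f : ℂ → A) (hf : S.toDynamics.IsAnalyticExt a f) :
    Tendsto (fun n => L (F n 0 * S.γ a)) atTop (𝓝 (p a ξ)) := by
  obtain ⟨K, hK0, hKb⟩ := G.rightMul hK (S.γ a) _ hf.gam
  have hcau : CauchySeq (fun n => L (F n 0 * S.γ a)) := by
    have hc := h0.cauchySeq
    rw [Metric.cauchySeq_iff'] at hc ⊢
    intro ε hε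
    obtain ⟨N, hN⟩ := hc (ε / (K + 1)) (by positivity)
    refine ⟨N, fun n hn => ?_⟩
    have := hN n hn
    rw [dist_eq_norm, ← map_sub] at this ⊢
    rw [← sub_mul]
    refine (hKb _).trans_lt ?_
    rw [lt_div_iff₀ (by positivity)] at this
    nlinarith [norm_nonneg (L (F n 0 - F N 0))]
  obtain ⟨η, hη⟩ := cauchySeq_tendsto_of_complete hcau
  suffices η = p a ξ by rw [← this]; exact hη
  have hcs : (fun x => ⟪L x, η⟫_ℂ) = fun x => ⟪L x, p a ξ⟫_ℂ := by
    refine eq_of_analytic S.toDynamics (by fun_prop) (by fun_prop) fun x' g' hg' => ?_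
    have hg := hg'.star
    set x := star x' with hx
    have hx' : x' = star x := by rw [hx, star_star]
    set g := fun z => star (g' (starRingEnd ℂ z)) with hgdef
    rw [hx']
    have l1 : Tendsto (fun n => ⟪L (star x), L (F n 0 * S.γ a)⟫_ℂ) atTop (𝓝 ⟪L (star x), η⟫_ℂ) :=
      tendsto_const_nhds.inner hη
    have l2 : Tendsto (fun n => ⟪L (star (S.γ a * g (Complex.I * β))), L (F n (Complex.I * β))⟫_ℂ)
        atTop (𝓝 ⟪L (star (S.γ a * g (Complex.I * β))), ξ⟫_ℂ) :=
      tendsto_const_nhds.inner h1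
    have e : ∀ n, ⟪L (star x), L (F n 0 * S.γ a)⟫_ℂ =
        ⟪L (star (S.γ a * g (Complex.I * β))), L (F n (Complex.I * β))⟫_ℂ := by
      intro n
      rw [G.inner_eq, G.inner_eq, star_star, star_star]
      have := G.kms hK (S.γ a) _ _ (hg.mul (hF n))
      rw [← mul_assoc, ← this, mul_assoc]
    rw [tendsto_nhds_unique l1 (l2.congr fun n => (e n).symm)]
    rw [← inner_conj_symm, ← T.rep, ← T.herm, star_star, T.tw _ _ _ hg, S.γ_invol]
    rw [G.adj', G.act, ← inner_conj_symm, ← T.rep, ← T.herm, star_mul, star_star, star_star]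
  exact G.dense.eq_of_inner_right ℂ fun x => congrFun hcs x

lemma tau_kms [CompleteSpace H] (G : IsGNS ω L p) {S : GradedDyn A} {β : ℝ}
    (hK : S.toDynamics.IsKMS β ω) {ρ₁ ρ₂ : A → ℂ} {ξ₁ ξ₂ : H} (T₁ : TwVec S β L p ρ₁ ξ₁)
    (T₂ : TwVec S β L p ρ₂ ξ₂) (a b : A) (fa fb : ℂ → A)
    (ha : S.toDynamics.IsAnalyticExt a fa) (hb : S.toDynamics.IsAnalyticExt b fb) :
    ⟪ξ₁, p (a * fb (Complex.I * β)) ξ₂⟫_ℂ = ⟪ξ₁, p (b * a) ξ₂⟫_ℂ := by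
  obtain ⟨F, hF, h0, h1⟩ := approx G hK T₂
  have l1 : Tendsto (fun n => ⟪ξ₁, p (a * fb (Complex.I * β)) (L (F n (Complex.I * β)))⟫_ℂ) atTop
      (𝓝 ⟪ξ₁, p (a * fb (Complex.I * β)) ξ₂⟫_ℂ) :=
    tendsto_const_nhds.inner (((p _).continuous.tendsto _).comp h1)
  have l2 : Tendsto (fun n => ⟪ξ₁, p b (L (F n 0 * S.γ a))⟫_ℂ) atTop (𝓝 ⟪ξ₁, p b (p a ξ₂)⟫_ℂ) :=
    tendsto_const_nhds.inner (((p b).continuous.tendsto _).comp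
      (conv_right G hK T₂ hF h0 h1 a fa ha))
  rw [G.mul b a, ContinuousLinearMap.comp_apply]
  refine tendsto_nhds_unique l1 (l2.congr fun n => ?_)
  rw [G.act, G.act, ← T₁.rep, ← T₁.rep]
  have := T₁.tw a _ _ (hb.mul (hF n))
  rw [← mul_assoc, ← this, mul_assoc]

lemma tau_inv [CompleteSpace H] (G : IsGNS ω L p) {S : GradedDyn A} {β : ℝ}
    (hK : S.toDynamics.IsKMS β ω) (hγ : ∀ a, ω (S.γ a) = ω a)
    {ρ₁ ρ₂ : A → ℂ} {ξ₁ ξ₂ : H} (T₁ : TwVec S β L p ρ₁ ξ₁)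
    (T₂ : TwVec S β L p ρ₂ ξ₂) (a : A) :
    ⟪ξ₁, p (S.γ a) ξ₂⟫_ℂ = ⟪ξ₁, p a ξ₂⟫_ℂ := by
  obtain ⟨F, hF, h0, h1⟩ := approx G hK T₂
  have h2 : Tendsto (fun n => L (S.γ (F n 0))) atTop (𝓝 ξ₂) := by
    rw [tendsto_iff_norm_sub_tendsto_zero] at h0 ⊢
    simpa only [gns_norm_inv G T₂.rep S.γ hγ T₂.inv] using h0
  have l1 : Tendsto (fun n => ⟪ξ₁, p (S.γ a) (L (S.γ (F n 0)))⟫_ℂ) atTop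
      (𝓝 ⟪ξ₁, p (S.γ a) ξ₂⟫_ℂ) :=
    tendsto_const_nhds.inner (((p _).continuous.tendsto _).comp h2)
  have l2 : Tendsto (fun n => ⟪ξ₁, p a (L (F n 0))⟫_ℂ) atTop (𝓝 ⟪ξ₁, p a ξ₂⟫_ℂ) :=
    tendsto_const_nhds.inner (((p _).continuous.tendsto _).comp h0)
  refine tendsto_nhds_unique l1 (l2.congr fun n => ?_)
  rw [G.act, G.act, ← T₁.rep, ← T₁.rep, ← map_mul, T₁.inv]

end main2

lemma two_extreme {V : Type*} [AddCommGroup V] [Module ℝ V] (X : Set V) (w : V)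
    (hr : ∀ x ∈ X, w + (w - x) ∈ X)
    (hp : ∀ x ∈ X, ∀ y ∈ X, x ≠ w → ∃ c : ℝ, y - w = c • (x - w)) :
    ∃ a b : V, Set.extremePoints ℝ X ⊆ {a, b} := by
  have key : ∀ x ∈ Set.extremePoints ℝ X, ∀ y ∈ X, ∀ c : ℝ, |c| < 1 → x - w = c • (y - w) →
      y = x := by
    intro x hx y hy c hc h
    rw [abs_lt] at hc
    refine hx.2 hy (hr y hy) ⟨(1 + c) / 2, (1 - c) / 2, by linarith, by linarith, by ring, ?_⟩
    have : x = w + c • (y - w) := by rw [← h]; abel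
    rw [this]
    module
  by_cases h : ∃ x ∈ Set.extremePoints ℝ X, x ≠ w
  · obtain ⟨x, hx, hxw⟩ := h
    refine ⟨x, w + (w - x), fun y hy => ?_⟩
    obtain ⟨c, hc⟩ := hp x hx.1 y hy.1 hxw
    rcases lt_trichotomy |c| 1 with h1 | h1 | h1
    · left; exact (key y hy x hx.1 c h1 hc).symm
    · rcases (abs_eq zero_le_one).1 h1 with h2 | h2
      · left
        rw [h2, one_smul] at hc
        exact sub_left_inj.1 hc
      · right
        rw [h2, neg_one_smul] at hc
        have : y = w + (y - w) := by abel
        rw [Set.mem_singleton_iff, this, hc]; abel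
    · left
      have hc0 : c ≠ 0 := by rintro rfl; norm_num at h1
      refine key x hx y hy.1 c⁻¹ ?_ ?_
      · rw [abs_inv]; exact inv_lt_one_of_one_lt₀ h1
      · rw [hc, smul_smul, inv_mul_cancel₀ hc0, one_smul]
  · push Not at h
    exact ⟨w, w, fun x hx => Or.inl (h x hx)⟩

section main3
variable {H : Type*} [NormedAddCommGroup H] [InnerProductSpace ℂ H]
  {ω : A → ℂ} {L : A →L[ℂ] H} {p : A → H →L[ℂ] H}

lemma ext_scalar (G : IsGNS ω L p) (S : GradedDyn A) (β : ℝ)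
    (hext : ω ∈ Set.extremePoints ℝ
      {ω' : A → ℂ | S.toDynamics.IsKMS β ω' ∧ ∀ a, ω' (S.γ a) = ω' a})
    (θ : A → ℂ) (hl : IsLinearMap ℂ θ)
    (hk : ∀ a b : A, ∀ fa fb : ℂ → A, S.toDynamics.IsAnalyticExt a fa →
      S.toDynamics.IsAnalyticExt b fb → θ (a * fb (Complex.I * β)) = θ (b * a))
    (hγ : ∀ a, θ (S.γ a) = θ a)
    (hb : ∀ a, ∃ r : ℝ, θ (star a * a) = r ∧ |r| ≤ ‖L a‖ ^ 2) :
    ∃ s : ℂ, ∀ a, θ a = s * ω a := by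
  obtain ⟨⟨⟨⟨hωl, hωp, hω1⟩, hωk⟩, hωγ⟩, hex⟩ := hext
  obtain ⟨s, hs, hs1⟩ := hb 1
  have hL1 : ‖L 1‖ ^ 2 = 1 := by
    have := G.sq 1
    simp only [star_one, one_mul, hω1] at this
    exact_mod_cast this.symm
  rw [hL1, abs_le] at hs1
  simp only [star_one, one_mul] at hs
  have mem : ∀ ε : ℝ, |ε| ≤ 1 / 2 → 
      (fun a => ((1 + ε * s)⁻¹ : ℝ) * (ω a + ε * θ a)) ∈
        {ω' : A → ℂ | S.toDynamics.IsKMS β ω' ∧ ∀ a, ω' (S.γ a) = ω' a} := by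
    intro ε hε
    rw [abs_le] at hε
    have hpos : 0 < 1 + ε * s := by nlinarith
    refine ⟨⟨⟨⟨?_, ?_⟩, ?_, ?_⟩, ?_⟩, ?_⟩
    · intro x y; simp only [hωl.map_add, hl.map_add]; ring
    · intro c x; simp only [hωl.map_smul, hl.map_smul, smul_eq_mul]; ring
    · intro a
      obtain ⟨r, hr, hr1⟩ := hb a
      rw [abs_le] at hr1
      beta_reduce
      rw [hr, G.sq]
      have : 0 ≤ (1 + ε * s)⁻¹ * (‖L a‖ ^ 2 + ε * r) := by
        refine mul_nonneg (inv_nonneg.2 hpos.le) ?_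
        nlinarith [sq_nonneg ‖L a‖]
      exact_mod_cast this
    · beta_reduce
      rw [hω1, hs]
      have : (1 + ε * s)⁻¹ * (1 + ε * s) = 1 := inv_mul_cancel₀ hpos.ne'
      exact_mod_cast this
    · intro a b fa fb ha hb
      simp only [hωk a b fa fb ha hb, hk a b fa fb ha hb]
    · intro a; simp only [hωγ, hγ]
  have p1 : 0 < 1 + (1/2) * s := by linarith
  have p2 : 0 < 1 + (-(1/2)) * s := by linarith
  have key := hex (mem (1/2) (by rw [abs_of_pos] <;> norm_num))
    (mem (-(1/2)) (by rw [abs_neg, abs_of_pos] <;> norm_num))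
    ⟨(1 + (1/2) * s) / 2, (1 + (-(1/2)) * s) / 2, by linarith, by linarith, by ring, by
      funext a
      have q1 : ((1 + (1/2) * s : ℝ) : ℂ) ≠ 0 := by exact_mod_cast p1.ne'
      have q2 : ((1 + (-(1/2)) * s : ℝ) : ℂ) ≠ 0 := by exact_mod_cast p2.ne'
      simp only [Pi.add_apply, Pi.smul_apply, Complex.real_smul, Complex.ofReal_inv,
        Complex.ofReal_div]
      generalize ((1 + (1/2) * s : ℝ) : ℂ) = x at *
      generalize ((1 + (-(1/2)) * s : ℝ) : ℂ) = y at *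
      field_simp
      push_cast
      ring⟩
  refine ⟨s, fun a => ?_⟩
  have h := congrFun key a
  beta_reduce at h
  have q1 : ((1 + (1/2) * s : ℝ) : ℂ) ≠ 0 := by exact_mod_cast p1.ne'
  rw [Complex.ofReal_inv, inv_mul_eq_iff_eq_mul₀ q1] at h
  push_cast at h
  linear_combination 2 * h

lemma theta_scalar [CompleteSpace H] (G : IsGNS ω L p) (S : GradedDyn A) (β : ℝ)
    (hext : ω ∈ Set.extremePoints ℝ
      {ω' : A → ℂ | S.toDynamics.IsKMS β ω' ∧ ∀ a, ω' (S.γ a) = ω' a})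
    {ρ₁ ρ₂ : A → ℂ} {ξ₁ ξ₂ : H} (T₁ : TwVec S β L p ρ₁ ξ₁)
    (T₂ : TwVec S β L p ρ₂ ξ₂) (u : ℂ) (hu : ‖u‖ ≤ 1 / 2) :
    ∃ s : ℂ, ∀ a, u * ⟪ξ₁, p a ξ₂⟫_ℂ + starRingEnd ℂ u * ⟪ξ₂, p a ξ₁⟫_ℂ = s * ω a := by
  have hK := hext.1.1
  have hωγ := hext.1.2
  refine ext_scalar G S β hext _ ⟨?_, ?_⟩ ?_ ?_ ?_
  · intro a b
    simp only [(G.lin _).1, inner_add_right]; ring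
  · intro c a
    simp only [(G.lin _).2, inner_smul_right, smul_eq_mul]; ring
  · intro a b fa fb ha hb
    simp only [tau_kms G hK T₁ T₂ a b fa fb ha hb, tau_kms G hK T₂ T₁ a b fa fb ha hb]
  · intro a
    simp only [tau_inv G hK hωγ T₁ T₂, tau_inv G hK hωγ T₂ T₁]
  · intro a
    have h1 : ⟪ξ₁, p (star a * a) ξ₂⟫_ℂ = ⟪p a ξ₁, p a ξ₂⟫_ℂ := by
      rw [G.mul, ContinuousLinearMap.comp_apply, G.adj', star_star]
    have h2 : ⟪ξ₂, p (star a * a) ξ₁⟫_ℂ = starRingEnd ℂ ⟪p a ξ₁, p a ξ₂⟫_ℂ := by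
      rw [G.mul, ContinuousLinearMap.comp_apply, G.adj', star_star, inner_conj_symm]
    refine ⟨2 * (u * ⟪p a ξ₁, p a ξ₂⟫_ℂ).re, ?_, ?_⟩
    · rw [h1, h2, ← map_mul, Complex.add_conj]
    · rw [abs_mul, abs_two]
      have h3 := Complex.abs_re_le_norm (u * ⟪p a ξ₁, p a ξ₂⟫_ℂ)
      have h4 := norm_inner_le_norm (𝕜 := ℂ) (p a ξ₁) (p a ξ₂)
      have h5 : ‖p a ξ₁‖ * ‖p a ξ₂‖ ≤ ‖L a‖ * ‖L a‖ :=
        mul_le_mul (T₁.bd a) (T₂.bd a) (norm_nonneg _) (norm_nonneg _)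
      rw [norm_mul] at h3
      have h6 : ‖u‖ * ‖⟪p a ξ₁, p a ξ₂⟫_ℂ‖ ≤ 1 / 2 * (‖L a‖ * ‖L a‖) :=
        mul_le_mul hu (h4.trans h5) (norm_nonneg _) (by norm_num)
      nlinarith

lemma tau_scalar [CompleteSpace H] (G : IsGNS ω L p) (S : GradedDyn A) (β : ℝ)
    (hext : ω ∈ Set.extremePoints ℝ
      {ω' : A → ℂ | S.toDynamics.IsKMS β ω' ∧ ∀ a, ω' (S.γ a) = ω' a})
    {ρ₁ ρ₂ : A → ℂ} {ξ₁ ξ₂ : H} (T₁ : TwVec S β L p ρ₁ ξ₁)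
    (T₂ : TwVec S β L p ρ₂ ξ₂) :
    ∃ s : ℂ, ∀ a, ⟪ξ₁, p a ξ₂⟫_ℂ = s * ω a := by
  obtain ⟨s, hs⟩ := theta_scalar G S β hext T₁ T₂ (1 / 2) (by norm_num)
  obtain ⟨t, ht⟩ := theta_scalar G S β hext T₁ T₂ (Complex.I / 2) (by simp)
  refine ⟨s - Complex.I * t, fun a => ?_⟩
  have h1 := hs a
  have h2 := ht a
  simp only [map_div₀, map_one, Complex.conj_I, map_ofNat] at h1 h2
  linear_combination h1 - Complex.I * h2 +
    (⟪ξ₁, p a ξ₂⟫_ℂ / 2 - ⟪ξ₂, p a ξ₁⟫_ℂ / 2) * Complex.I_sq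

lemma proportional_aux [CompleteSpace H] (G : IsGNS ω L p) (S : GradedDyn A) (β : ℝ)
    (hext : ω ∈ Set.extremePoints ℝ
      {ω' : A → ℂ | S.toDynamics.IsKMS β ω' ∧ ∀ a, ω' (S.γ a) = ω' a})
    {ρ₁ ρ₂ : A → ℂ} {ξ₁ ξ₂ : H} (T₁ : TwVec S β L p ρ₁ ξ₁)
    (T₂ : TwVec S β L p ρ₂ ξ₂) (h0 : ∃ a, ρ₁ a ≠ 0) : ∃ c : ℝ, ∀ a, ρ₂ a = c * ρ₁ a := by
  obtain ⟨s, hs⟩ := tau_scalar G S β hext T₁ T₁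
  obtain ⟨k, hk⟩ := tau_scalar G S β hext T₁ T₂
  have hω1 : ω 1 = 1 := hext.1.1.1.2.2
  have hs0 : s ≠ 0 := by
    have := hs 1
    rw [G.one, hω1, mul_one] at this
    rw [← this, inner_self_ne_zero]
    rintro rfl
    obtain ⟨a, ha⟩ := h0
    exact ha (by rw [T₁.rep, inner_zero_left])
  obtain ⟨c, F, -, hc⟩ := analytic_seq G S.toDynamics ξ₁
  have psub : ∀ a b x, p (a - b) x = p a x - p b x := by
    intro a b x
    rw [sub_eq_add_neg, (G.lin x).1, ← neg_one_smul ℂ b, (G.lin x).2, neg_one_smul,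
      ← sub_eq_add_neg]
  have hcau : CauchySeq (fun n => p (c n) ξ₁) := by
    have hc' := hc.cauchySeq
    rw [Metric.cauchySeq_iff'] at hc' ⊢
    intro ε hε
    obtain ⟨N, hN⟩ := hc' ε hε
    refine ⟨N, fun n hn => ?_⟩
    have := hN n hn
    rw [dist_eq_norm] at this ⊢
    rw [← psub]
    rw [← map_sub] at this
    exact (T₁.bd _).trans_lt this
  obtain ⟨η, hη⟩ := cauchySeq_tendsto_of_complete hcau
  have hη' : η = s • L 1 := by
    refine G.dense.eq_of_inner_left ℂ fun y => ?_
    have l1 : Tendsto (fun n => ⟪p (c n) ξ₁, L y⟫_ℂ) atTop (𝓝 ⟪η, L y⟫_ℂ) :=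
      hη.inner tendsto_const_nhds
    have l2 : Tendsto (fun n => ⟪p (star y) (L (c n)), ξ₁⟫_ℂ) atTop (𝓝 ⟪p (star y) ξ₁, ξ₁⟫_ℂ) :=
      (((p (star y)).continuous.tendsto _).comp hc).inner tendsto_const_nhds
    have e : ∀ n, ⟪p (star y) (L (c n)), ξ₁⟫_ℂ = ⟪p (c n) ξ₁, L y⟫_ℂ := by
      intro n
      rw [G.adj (c n), G.act, G.act, ← T₁.rep, ← inner_conj_symm, ← T₁.rep, ← T₁.herm,
        star_mul, star_star]
    rw [tendsto_nhds_unique l1 (l2.congr e), ← inner_conj_symm, hs, inner_smul_left, map_mul]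
    congr 1
    rw [← inner_conj_symm, G.inner_eq, mul_one]
  have main : ∀ x, starRingEnd ℂ s * ρ₂ x = k * ρ₁ x := by
    intro x
    have l1 : Tendsto (fun n => ⟪p (c n) ξ₁, p x ξ₂⟫_ℂ) atTop (𝓝 ⟪η, p x ξ₂⟫_ℂ) :=
      hη.inner tendsto_const_nhds
    have l2 : Tendsto (fun n => k * ⟪L (c n), L x⟫_ℂ) atTop (𝓝 (k * ⟪ξ₁, L x⟫_ℂ)) :=
      (hc.inner tendsto_const_nhds).const_mul k
    have e : ∀ n, k * ⟪L (c n), L x⟫_ℂ = ⟪p (c n) ξ₁, p x ξ₂⟫_ℂ := by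
      intro n
      rw [G.inner_eq, ← hk, G.mul, ContinuousLinearMap.comp_apply, G.adj (c n)]
    have := tendsto_nhds_unique l1 (l2.congr e)
    rw [T₁.rep, ← this, hη', inner_smul_left, G.adj', G.act, mul_one, ← inner_conj_symm, ← T₂.rep,
      ← T₂.herm, star_star]
  have hs0' : starRingEnd ℂ s ≠ 0 := by simpa using hs0
  set m := k / starRingEnd ℂ s with hm
  have main' : ∀ x, ρ₂ x = m * ρ₁ x := by
    intro x
    rw [hm, div_mul_eq_mul_div, eq_div_iff hs0', mul_comm, main]
  have hreal : starRingEnd ℂ m = m := by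
    obtain ⟨a, ha⟩ := h0
    have h1 := main' (star a)
    rw [T₂.herm, T₁.herm, main' a, map_mul] at h1
    exact mul_right_cancel₀ (by simpa using ha) h1
  refine ⟨m.re, fun a => ?_⟩
  rw [main' a, Complex.conj_eq_iff_re.1 hreal]

lemma cp_twisted (G : IsGNS ω L p) (S : GradedDyn A) (β : ℝ) (hωγ : ∀ a, ω (S.γ a) = ω a)
    {W : A × A → ℂ}
    (hW : cpIsKMS S.toDynamics S.γ β W) (hWω : ∀ a, W (a, 0) = ω a) :
    TwistedKMSDom S.toDynamics S.γ β ω (fun a => W (0, a)) := by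
  obtain ⟨⟨hl, hpos, -⟩, hk⟩ := hW
  set ρ : A → ℂ := fun a => W (0, a) with hρ
  have hsplit : ∀ a b, W (a, b) = ω a + ρ b := by
    intro a b
    rw [← hWω, hρ, ← hl.map_add]; simp
  have hlin : IsLinearMap ℂ ρ := by
    constructor
    · intro x y; simp only [hρ]; rw [← hl.map_add]; simp
    · intro c x; simp only [hρ]; rw [← hl.map_smul]; simp
  have htw : ∀ a b : A, ∀ fa fb : ℂ → A, S.toDynamics.IsAnalyticExt a fa →
      S.toDynamics.IsAnalyticExt b fb → ρ (a * fb (Complex.I * β)) = ρ (b * S.γ a) := by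
    intro a b fa fb ha hb
    have := hk (a, 0) (0, b) (fun z => (fa z, 0)) (fun z => (0, fb z))
      ⟨ha.1.prodMk (differentiable_const _), fun t => by simp [ha.2]⟩
      ⟨(differentiable_const _).prodMk hb.1, fun t => by simp [hb.2]⟩
    simpa [cpMul, hρ] using this
  have hpos' : ∀ a b, 0 ≤ ((‖L a‖ ^ 2 + ‖L b‖ ^ 2 : ℝ) : ℂ) +
      (ρ (star a * b) + ρ (S.γ (star b * a))) := by
    intro a b
    have := hpos (a, b)
    simp only [cpMul, cpStar] at this
    rw [hsplit, ← map_mul, ← map_mul] at this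
    have e : ω (star a * a + S.γ (star b * b)) = ((‖L a‖ ^ 2 + ‖L b‖ ^ 2 : ℝ) : ℂ) := by
      have h1 : ∀ x y, ω (x + y) = ω x + ω y := by
        intro x y
        rw [G.omega_eq, map_add, inner_add_right, ← G.omega_eq, ← G.omega_eq]
      rw [h1, hωγ, G.sq, G.sq]; push_cast; ring
    rw [e, hlin.map_add] at this
    exact this
  have him : ∀ a b, (ρ (star a * b) + ρ (S.γ (star b * a))).im = 0 := by
    intro a b
    have := (Complex.le_def.1 (hpos' a b)).2
    rw [Complex.add_im, Complex.ofReal_im] at this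
    simpa using this.symm
  have hconj : ∀ a b, ρ (S.γ (star b * a)) = starRingEnd ℂ (ρ (star a * b)) := by
    intro a b
    have h1 := him a b
    have h2 := him a (Complex.I • b)
    rw [mul_smul_comm, hlin.map_smul, star_smul, smul_mul_assoc, map_smul, hlin.map_smul] at h2
    simp at h1 h2
    apply Complex.ext
    · simp; linarith
    · simp; linarith
  have hre : ∀ a b, 0 ≤ ‖L a‖ ^ 2 + ‖L b‖ ^ 2 + 2 * (ρ (star a * b)).re := by
    intro a b
    have := (Complex.le_def.1 (hpos' a b)).1
    rw [hconj, Complex.add_conj] at this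
    rw [Complex.add_re, Complex.ofReal_re, Complex.ofReal_re] at this
    simpa using this
  have hdom : Dominated ω ρ := by
    intro a b
    rw [G.sq, G.sq]
    set z := ρ (star a * b) with hz
    obtain ⟨u, hu, huz⟩ : ∃ u : ℂ, ‖u‖ = 1 ∧ u * z = ‖z‖ := by
      by_cases hz0 : z = 0
      · exact ⟨1, by simp, by simp [hz0]⟩
      · have hn : (‖z‖ : ℂ) ≠ 0 := by exact_mod_cast norm_ne_zero_iff.2 hz0
        refine ⟨‖z‖ / z, by rw [norm_div, Complex.norm_real, norm_norm, div_self (norm_ne_zero_iff.2 hz0)], ?_⟩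
        field_simp
    have hq : ∀ t : ℝ, 0 ≤ ‖L b‖ ^ 2 * (t * t) + (2 * ‖z‖) * t + ‖L a‖ ^ 2 := by
      intro t
      have := hre a (((t : ℂ) * u) • b)
      rw [mul_smul_comm, hlin.map_smul, map_smul, norm_smul, norm_mul, hu, smul_eq_mul,
        ← hz, mul_assoc (t : ℂ) u z, huz, ← Complex.ofReal_mul, Complex.ofReal_re, mul_one, Complex.norm_real,
        mul_pow, Real.norm_eq_abs, sq_abs] at this
      linarith
    have := discrim_le_zero hq
    rw [discrim] at this
    have h2 : ‖z‖ ^ 2 ≤ ‖L a‖ ^ 2 * ‖L b‖ ^ 2 := by nlinarith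
    exact_mod_cast h2
  have hcont := dom_cont G hlin hdom
  have hinv : ∀ a, ρ (S.γ a) = ρ a := by
    have hγc := sa_cont S.γ
    intro a
    refine congrFun (eq_of_analytic S.toDynamics (u := fun a => ρ (S.γ a)) (v := ρ)
      (by fun_prop) hcont fun a f hf => ?_) a
    have := htw a 1 f _ hf Dynamics.IsAnalyticExt.one
    simpa using this.symm
  refine ⟨⟨hlin, htw⟩, fun a => ?_, hdom⟩
  have := hconj 1 a
  rw [hinv] at this
  simpa using this

end main3

lemma cp_reflect (S : GradedDyn A) (β : ℝ) {W : A × A → ℂ}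
    (hW : cpIsKMS S.toDynamics S.γ β W) :
    cpIsKMS S.toDynamics S.γ β (fun q => W (q.1, -q.2)) := by
  obtain ⟨⟨hl, hpos, h1⟩, hk⟩ := hW
  refine ⟨⟨⟨?_, ?_⟩, ?_, ?_⟩, ?_⟩
  · intro x y; rw [← hl.map_add]; simp [add_comm]
  · intro c x; rw [← hl.map_smul]; simp
  · intro q
    have := hpos (q.1, -q.2)
    simpa [cpMul, cpStar, add_comm, neg_add_rev] using this
  · simpa [cpOne] using h1
  · intro x y fx fy hx hy
    have := hk (x.1, -x.2) (y.1, -y.2) (fun z => ((fx z).1, -(fx z).2))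
      (fun z => ((fy z).1, -(fy z).2))
      ⟨(hx.1.fst).prodMk (hx.1.snd.neg), fun t => by simp [hx.2]⟩
      ⟨(hy.1.fst).prodMk (hy.1.snd.neg), fun t => by simp [hy.2]⟩
    simpa [cpMul, add_comm, neg_add_rev] using this

lemma proportional.{u} {A : Type u} [CStarAlgebra A] (S : GradedDyn A) (β : ℝ) {ω : A → ℂ}
    (hext : ω ∈ Set.extremePoints ℝ
      {ω' : A → ℂ | S.toDynamics.IsKMS β ω' ∧ ∀ a, ω' (S.γ a) = ω' a})
    {ρ₁ ρ₂ : A → ℂ} (h₁ : TwistedKMSDom S.toDynamics S.γ β ω ρ₁)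
    (h₂ : TwistedKMSDom S.toDynamics S.γ β ω ρ₂)
    (h0 : ∃ a, ρ₁ a ≠ 0) : ∃ c : ℝ, ∀ a, ρ₂ a = c * ρ₁ a := by
  obtain ⟨H, _, _, _, L, p, G⟩ := exists_gns ω hext.1.1.1
  obtain ⟨ξ₁, T₁⟩ := exists_twVec G h₁
  obtain ⟨ξ₂, T₂⟩ := exists_twVec G h₂
  exact proportional_aux G S β hext T₁ T₂ h0

lemma twisted_neg {S : GradedDyn A} {β : ℝ} {ω ρ : A → ℂ}
    (h : TwistedKMSDom S.toDynamics S.γ β ω ρ) :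
    TwistedKMSDom S.toDynamics S.γ β ω (fun a => -ρ a) := by
  obtain ⟨⟨hl, ht⟩, hh, hd⟩ := h
  refine ⟨⟨⟨fun x y => ?_, fun c x => ?_⟩, fun a b fa fb ha hb => ?_⟩, fun a => ?_, fun a b => ?_⟩
  · rw [hl.map_add]; ring
  · rw [hl.map_smul]; simp
  · beta_reduce
    rw [ht a b fa fb ha hb]
  · beta_reduce
    rw [hh, map_neg]
  · simpa using hd a b
theorem at_most_two_extremal_extensions {A : Type*} [CStarAlgebra A]
    (S : GradedDyn A) (β : ℝ) (ω : A → ℂ)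
    (hext : ω ∈ Set.extremePoints ℝ
      {ω' : A → ℂ | S.toDynamics.IsKMS β ω' ∧ ∀ a, ω' (S.γ a) = ω' a}) :
    (∃ ρ₁ ρ₂ : A → ℂ,
      Set.extremePoints ℝ {ρ : A → ℂ | TwistedKMSDom S.toDynamics S.γ β ω ρ} ⊆
        {ρ₁, ρ₂}) ∧
    ∃ W₁ W₂ : A × A → ℂ,
      Set.extremePoints ℝ
        {W : A × A → ℂ | cpIsKMS S.toDynamics S.γ β W ∧ ∀ a : A, W (a, 0) = ω a} ⊆
        {W₁, W₂} := by
  constructor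
  · refine two_extreme _ 0 (fun ρ hρ => ?_) (fun ρ₁ h₁ ρ₂ h₂ h0 => ?_)
    · have := twisted_neg hρ
      simp only [zero_add, zero_sub]
      exact this
    · obtain ⟨c, hc⟩ := proportional S β hext h₁ h₂ (Function.ne_iff.1 h0)
      refine ⟨c, ?_⟩
      funext a
      simpa using hc a
  · obtain ⟨H, _, _, _, L, p, G⟩ := exists_gns ω hext.1.1.1
    have hsplit : ∀ W : A × A → ℂ, cpIsKMS S.toDynamics S.γ β W → (∀ a : A, W (a, 0) = ω a) →
        ∀ q, W q = ω q.1 + W (0, q.2) := by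
      intro W hW h q
      rw [← h, ← hW.1.1.map_add]; simp
    refine two_extreme _ (fun q => ω q.1) (fun W hW => ?_) (fun W₁ h₁ W₂ h₂ h0 => ?_)
    · have e : (fun q : A × A => ω q.1) + ((fun q : A × A => ω q.1) - W) =
          fun q => W (q.1, -q.2) := by
        funext q
        have h1 := hsplit W hW.1 hW.2 q
        have h2 := hsplit W hW.1 hW.2 (q.1, -q.2)
        have h3 : W (0, -q.2) = - W (0, q.2) := by
          rw [← hW.1.1.1.map_neg]; simp
        simp only [Pi.add_apply, Pi.sub_apply]
        rw [h2, h1, h3]; ring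
      rw [e]
      exact ⟨cp_reflect S β hW.1, fun a => by simpa using hW.2 a⟩
    · have hne : ∃ a, W₁ (0, a) ≠ 0 := by
        by_contra hcon
        push Not at hcon
        refine h0 (funext fun q => ?_)
        rw [hsplit W₁ h₁.1 h₁.2 q, hcon, add_zero]
      obtain ⟨c, hc⟩ := proportional S β hext (cp_twisted G S β hext.1.2 h₁.1 h₁.2)
        (cp_twisted G S β hext.1.2 h₂.1 h₂.2) hne
      refine ⟨c, ?_⟩
      funext q
      simp only [Pi.sub_apply, Pi.smul_apply, Complex.real_smul]
      rw [hsplit W₁ h₁.1 h₁.2 q, hsplit W₂ h₂.1 h₂.2 q, hc]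
      ring

end
end

section
/- Let (M, Ω, V) be a graded von Neumann algebra and let α denote the modular flow t ↦ Ad_{Δ^{it}} associated to Ω. (i) If M is asymptotically abelian, i.e. [α_t(x), y] → 0 in the weak operator topology as t → ∞ for all x, y ∈ M, then the centralizer Z_Ω(M) equals the center Z(M), and in particular Z(M, V) ⊆ Z(M). (ii) If M is V-graded asymptotically abelian, i.e. the graded commutator [α_t(x), y]_V := α_t(x) y − (V y V) α_t(x) → 0 in the weak operator topology as t → ∞ for all x, y ∈ M, then Z(M, V) = Z_Ω(M) ⊆ Z(M). -/
open scoped InnerProductSpace ComplexOrder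

noncomputable section

variable {H : Type*} [NormedAddCommGroup H] [InnerProductSpace ℂ H] [CompleteSpace H]

/-- A graded von Neumann algebra in standard form: a von Neumann algebra `M` with a cyclic
and separating vector `Ω`, the associated modular data `(J, Δ^{it})` (characterized by the
Tomita-Takesaki relations below), and a `ℤ₂`-grading `V`. -/
structure GradedVN (H : Type*) [NormedAddCommGroup H] [InnerProductSpace ℂ H]
    [CompleteSpace H] where
  M : VonNeumannAlgebra H
  Ω : H
  cyclic : Dense {ξ : H | ∃ x ∈ M, x Ω = ξ}
  separating : ∀ x ∈ M, x Ω = 0 → x = 0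
  /-- the modular conjugation (an antiunitary involution) -/
  J : H → H
  J_add : ∀ ξ η, J (ξ + η) = J ξ + J η
  J_smul : ∀ (c : ℂ) (ξ), J (c • ξ) = starRingEnd ℂ c • J ξ
  J_inner : ∀ ξ η, ⟪J ξ, J η⟫_ℂ = ⟪η, ξ⟫_ℂ
  J_invol : ∀ ξ, J (J ξ) = ξ
  J_Ω : J Ω = Ω
  /-- the modular group `Δ^{it}` -/
  U : ℝ → H ≃ₗᵢ[ℂ] H
  U_zero : ∀ ξ, U 0 ξ = ξ
  U_add : ∀ s t ξ, U (s + t) ξ = U s (U t ξ)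
  U_cont : ∀ ξ, Continuous fun t : ℝ => U t ξ
  U_Ω : ∀ t, U t Ω = Ω
  J_U : ∀ t ξ, J (U t ξ) = U t (J ξ)
  flow_mem : ∀ t : ℝ, ∀ x ∈ M, ∃ y ∈ M, ∀ ξ, y ξ = U t (x (U (-t) ξ))
  /-- `J M J ⊆ M'` -/
  tomita : ∀ x ∈ M, ∀ y ∈ M, ∀ ξ, J (x (J (y ξ))) = y (J (x (J ξ)))
  /-- `S = J Δ^{1/2}` maps `xΩ` to `x*Ω`, expressed via analytic continuation of the
  modular group. -/
  S_cond : ∀ x ∈ M, ∀ f : ℂ → H, Differentiable ℂ f → (∀ t : ℝ, f (t : ℂ) = U t (x Ω)) →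
    J (f (-(Complex.I) / 2)) = star x Ω
  /-- the grading -/
  V : H →L[ℂ] H
  V_star : star V = V
  V_invol : ∀ ξ, V (V ξ) = ξ
  V_Ω : V Ω = Ω
  V_mem : ∀ x ∈ M, ∃ y ∈ M, ∀ ξ, y ξ = V (x (V ξ))

namespace GradedVN

variable (N : GradedVN H)

/-- The `V`-twisted center `Z(M, V) = {x ∈ M | J x* J = x V}`. -/
def twistedCenter : Set (H →L[ℂ] H) :=
  {x | x ∈ N.M ∧ ∀ ξ, N.J (star x (N.J ξ)) = x (N.V ξ)}

/-- The center `Z(M)` of `M`. -/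
def centerSet : Set (H →L[ℂ] H) :=
  {z | z ∈ N.M ∧ ∀ y ∈ N.M, z * y = y * z}

/-- The `Ad_V`-fixed points `M^γ`. -/
def gammaFixed : Set (H →L[ℂ] H) :=
  {x | x ∈ N.M ∧ ∀ ξ, N.V (x (N.V ξ)) = x ξ}

/-- The fixed points `M^α` of the modular flow. -/
def flowFixed : Set (H →L[ℂ] H) :=
  {x | x ∈ N.M ∧ ∀ (t : ℝ) (ξ), x (N.U t ξ) = N.U t (x ξ)}

/-- The centralizer `Z_Ω(M)`. -/
def centralizerSet : Set (H →L[ℂ] H) :=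
  {x | x ∈ N.M ∧ ∀ y ∈ N.M, ⟪N.Ω, x (y N.Ω)⟫_ℂ = ⟪N.Ω, y (x N.Ω)⟫_ℂ}

/-- The twisted center of the reduced algebra `(M_p, V_p)` for a central `Ad_V`-invariant
projection `p` (for such `p`, the modular conjugation of `(pMp, pΩ)` is `J` restricted
to `pH`, so the relative twisted center consists of the `p`-supported elements of `M`
satisfying the twisted-center relation). -/
def tcRel (p : H →L[ℂ] H) : Set (H →L[ℂ] H) :=
  {x | x ∈ N.M ∧ x * p = x ∧ p * x = x ∧ ∀ ξ, N.J (star x (N.J ξ)) = x (N.V ξ)}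

/-- `p` is an `Ad_V`-invariant central projection. -/
def IsCentralInvProj (p : H →L[ℂ] H) : Prop :=
  p ∈ N.centerSet ∧ star p = p ∧ p * p = p ∧ ∀ ξ, N.V (p (N.V ξ)) = p ξ

/-- `p` is an `Ad_V`-invariant central projection carrying a partial isometry in the
relative twisted center which is unitary on `pH`. -/
def HasPI (p : H →L[ℂ] H) : Prop :=
  N.IsCentralInvProj p ∧ ∃ u ∈ N.tcRel p, star u * u = p ∧ u * star u = p

/-- Asymptotically abelian modular flow: `[α_t(x), y] → 0` weakly as `t → ∞`. -/
def AsympAbelian : Prop :=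
  ∀ x ∈ N.M, ∀ y ∈ N.M, ∀ ξ η : H,
    Filter.Tendsto
      (fun t : ℝ => ⟪ξ, N.U t (x (N.U (-t) (y η))) - y (N.U t (x (N.U (-t) η)))⟫_ℂ)
      Filter.atTop (nhds 0)

/-- `V`-graded asymptotically abelian modular flow:
`[α_t(x), y]_V = α_t(x) y − (V y V) α_t(x) → 0` weakly as `t → ∞`. -/
def GradedAsympAbelian : Prop :=
  ∀ x ∈ N.M, ∀ y ∈ N.M, ∀ ξ η : H,
    Filter.Tendsto
      (fun t : ℝ =>
        ⟪ξ, N.U t (x (N.U (-t) (y η))) - N.V (y (N.V (N.U t (x (N.U (-t) η)))))⟫_ℂ)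
      Filter.atTop (nhds 0)

end GradedVN

namespace GradedVN

open MeasureTheory Filter Topology

variable (N : GradedVN H)

def F (c : ℝ) (ζ : H) (z : ℂ) : H :=
  ∫ s : ℝ, Complex.exp (-((s : ℂ) - z) ^ 2) • N.U (c * s) ζ

theorem kernel_bound (R : ℝ) (z : ℂ) (hz : ‖z‖ ≤ R) (s : ℝ) :
    ‖Complex.exp (2 * s * z - s ^ 2)‖ ≤ Real.exp (2 * R ^ 2) * Real.exp (-(1/2) * s ^ 2) := by
  rw [Complex.norm_exp, ← Real.exp_add]
  apply Real.exp_le_exp.2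
  have h1 : (2 * (s:ℂ) * z - (s:ℂ) ^ 2).re = 2 * s * z.re - s ^ 2 := by
    simp [pow_two]
  rw [h1]
  have h2 : z.re ^ 2 ≤ R ^ 2 := by
    apply sq_le_sq'
    · linarith [Complex.abs_re_le_norm z, neg_abs_le z.re]
    · linarith [Complex.abs_re_le_norm z, le_abs_self z.re]
  nlinarith [sq_nonneg (2 * z.re - s)]

theorem bound_integrable (C : ℝ) :
    Integrable (fun s : ℝ => C * Real.exp (-(1/2) * s ^ 2)) :=
  (integrable_exp_neg_mul_sq (by norm_num)).const_mul C

theorem U_cont' (c : ℝ) (ζ : H) : Continuous fun s : ℝ => N.U (c * s) ζ :=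
  (N.U_cont ζ).comp (by fun_prop)

theorem kernel_bound' (R : ℝ) (z : ℂ) (hz : ‖z‖ ≤ R) (s : ℝ) :
    ‖(2 * s : ℂ) * Complex.exp (2 * s * z - s ^ 2)‖
      ≤ (2 * Real.exp (2 * (R + 1) ^ 2)) * Real.exp (-(1/2) * s ^ 2) := by
  have hR : 0 ≤ R := (norm_nonneg z).trans hz
  rw [norm_mul, Complex.norm_exp]
  have h1 : (2 * (s:ℂ) * z - (s:ℂ) ^ 2).re = 2 * s * z.re - s ^ 2 := by
    simp [pow_two]
  rw [h1]
  have h3 : ‖(2 * s : ℂ)‖ ≤ 2 * Real.exp |s| := by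
    simp only [norm_mul, Complex.norm_real, Real.norm_eq_abs, Complex.norm_ofNat]
    linarith [Real.add_one_le_exp |s|]
  calc _ ≤ 2 * Real.exp |s| * Real.exp (2 * s * z.re - s ^ 2) := by gcongr
    _ = 2 * Real.exp (|s| + (2 * s * z.re - s ^ 2)) := by rw [Real.exp_add]; ring
    _ ≤ 2 * Real.exp (2 * (R + 1) ^ 2 + -(1/2) * s ^ 2) := by
        refine mul_le_mul_of_nonneg_left (Real.exp_le_exp.2 ?_) (by norm_num)
        have h4 : s * z.re ≤ |s| * R := by
          calc s * z.re ≤ |s * z.re| := le_abs_self _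
            _ = |s| * |z.re| := abs_mul _ _
            _ ≤ _ := by gcongr; exact (Complex.abs_re_le_norm z).trans hz
        have := sq_abs s
        nlinarith [sq_nonneg (2 * (R + 1) - |s|), abs_nonneg s]
    _ = _ := by rw [Real.exp_add]; ring

/-- integrability of Gaussian kernels against bounded continuous functions -/
theorem integrable_aux {E : Type*} [NormedAddCommGroup E] [NormedSpace ℂ E] (z : ℂ) (h : ℝ → E)
    (hc : Continuous h) (C : ℝ) (hC : ∀ s, ‖h s‖ ≤ C) :
    Integrable (fun s : ℝ => Complex.exp (2 * s * z - s ^ 2) • h s) := by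
  refine (bound_integrable (Real.exp (2 * ‖z‖ ^ 2) * C)).mono' ?_ ?_
  · exact (Continuous.smul (by fun_prop) hc).aestronglyMeasurable
  · refine Eventually.of_forall fun s => ?_
    rw [norm_smul]
    have h1 := kernel_bound ‖z‖ z le_rfl s
    have h2 := hC s
    calc _ ≤ (Real.exp (2 * ‖z‖ ^ 2) * Real.exp (-(1/2) * s ^ 2)) * C := by gcongr
      _ = _ := by ring

theorem kernel_eq (z : ℂ) (s : ℝ) :
    Complex.exp (-((s : ℂ) - z) ^ 2)
      = Complex.exp (-z ^ 2) * Complex.exp (2 * s * z - s ^ 2) := by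
  rw [← Complex.exp_add]; congr 1; ring

theorem integrable_F {E : Type*} [NormedAddCommGroup E] [NormedSpace ℂ E] (z : ℂ) (h : ℝ → E)
    (hc : Continuous h) (C : ℝ) (hC : ∀ s, ‖h s‖ ≤ C) :
    Integrable (fun s : ℝ => Complex.exp (-((s : ℂ) - z) ^ 2) • h s) := by
  simp_rw [kernel_eq, mul_smul]
  exact (integrable_aux z h hc C hC).smul (Complex.exp (-z ^ 2))

theorem integrable_U (c : ℝ) (ζ : H) (z : ℂ) :
    Integrable (fun s : ℝ => Complex.exp (-((s : ℂ) - z) ^ 2) • N.U (c * s) ζ) :=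
  integrable_F z _ (N.U_cont' c ζ) ‖ζ‖ (fun s => by simp)

theorem F_differentiable (c : ℝ) (ζ : H) : Differentiable ℂ (N.F c ζ) := by
  have hF : N.F c ζ = fun z => Complex.exp (-z ^ 2) •
      ∫ s : ℝ, Complex.exp (2 * s * z - s ^ 2) • N.U (c * s) ζ := by
    funext z
    unfold F
    simp_rw [kernel_eq, mul_smul]
    rw [integral_smul]
  rw [hF]
  refine Differentiable.smul (by fun_prop) ?_
  intro z₀
  have key := hasDerivAt_integral_of_dominated_loc_of_deriv_le (μ := volume) (𝕜 := ℂ)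
    (F := fun (z : ℂ) (s : ℝ) => Complex.exp (2 * s * z - s ^ 2) • N.U (c * s) ζ)
    (F' := fun (z : ℂ) (s : ℝ) => ((2 * s : ℂ) * Complex.exp (2 * s * z - s ^ 2)) • N.U (c * s) ζ)
    (x₀ := z₀) (s := Metric.ball z₀ 1)
    (bound := fun s => ((2 * Real.exp (2 * ((‖z₀‖ + 1) + 1) ^ 2)) * ‖ζ‖) * Real.exp (-(1/2) * s ^ 2))
    (Metric.ball_mem_nhds z₀ one_pos) ?_ ?_ ?_ ?_ ?_ ?_
  · exact key.2.differentiableAt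
  · exact Eventually.of_forall fun z =>
      (Continuous.smul (by fun_prop) (N.U_cont' c ζ)).aestronglyMeasurable
  · exact integrable_aux z₀ _ (N.U_cont' c ζ) ‖ζ‖ (fun s => by simp)
  · exact (Continuous.smul (by fun_prop) (N.U_cont' c ζ)).aestronglyMeasurable
  · refine Eventually.of_forall fun s z hz => ?_
    have hz' : ‖z‖ ≤ ‖z₀‖ + 1 := by
      have := norm_le_norm_add_norm_sub' z z₀
      have h2 : ‖z - z₀‖ < 1 := by simpa [dist_eq_norm] using hz
      linarith
    have h1 := kernel_bound' _ z hz' s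
    rw [norm_smul, LinearIsometryEquiv.norm_map]
    calc _ ≤ _ := mul_le_mul_of_nonneg_right h1 (norm_nonneg ζ)
      _ = _ := by ring
  · exact bound_integrable _
  · refine Eventually.of_forall fun s z hz => ?_
    have h1 : HasDerivAt (fun z : ℂ => 2 * (s:ℂ) * z - (s:ℂ) ^ 2) (2 * (s:ℂ)) z := by
      have h0 := (hasDerivAt_id z).const_mul (2 * (s:ℂ))
      have h00 := h0.sub_const ((s:ℂ) ^ 2)
      simpa using h00
    have h2 := HasDerivAt.smul_const (h1.cexp) (N.U (c * s) ζ)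
    rwa [mul_comm (Complex.exp _)] at h2

theorem F_translate (c : ℝ) (ζ : H) (z : ℂ) (t : ℝ) :
    N.F c ζ (z + t) = N.U (c * t) (N.F c ζ z) := by
  unfold F
  have h1 := (N.U (c * t)).toContinuousLinearEquiv.toContinuousLinearMap.integral_comp_comm
    (N.integrable_U c ζ z)
  simp only [ContinuousLinearEquiv.coe_coe, LinearIsometryEquiv.coe_toContinuousLinearEquiv] at h1
  rw [← h1, ← integral_add_right_eq_self _ t]
  congr 1
  funext s
  rw [map_smul, ← N.U_add]
  congr 2
  · push_cast; ring_nf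
  · ring_nf

theorem U_adj (t : ℝ) (v ζ : H) : ⟪v, N.U t ζ⟫_ℂ = ⟪N.U (-t) v, ζ⟫_ℂ := by
  rw [← (N.U (-t)).inner_map_map v, ← N.U_add]
  simp [N.U_zero]

theorem F_adj (c : ℝ) (v ζ : H) (z : ℂ) (hz : starRingEnd ℂ z = -z) :
    ⟪v, N.F c ζ z⟫_ℂ = ⟪N.F c v z, ζ⟫_ℂ := by
  unfold F
  rw [← integral_inner (N.integrable_U c ζ z), ← inner_conj_symm,
    ← integral_inner (N.integrable_U c v z), ← integral_conj,
    ← integral_neg_eq_self]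
  congr 1
  funext s
  rw [inner_smul_right, inner_smul_right, map_mul, inner_conj_symm, U_adj, ← Complex.exp_conj]
  congr 1
  · congr 1
    simp [hz]
    ring
  · congr 2
    simp

theorem J_norm (ξ : H) : ‖N.J ξ‖ = ‖ξ‖ := by
  have h := N.J_inner ξ ξ
  rw [inner_self_eq_norm_sq_to_K, inner_self_eq_norm_sq_to_K] at h
  have h2 : ‖N.J ξ‖ ^ 2 = ‖ξ‖ ^ 2 := by exact_mod_cast h
  exact (sq_eq_sq₀ (norm_nonneg _) (norm_nonneg _)).1 h2

def Jl : H →ₗᵢ[ℝ] H where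
  toFun := N.J
  map_add' := N.J_add
  map_smul' r ξ := by
    have := N.J_smul (r : ℂ) ξ
    simpa using this
  norm_map' := N.J_norm

theorem J_F (c : ℝ) (ζ : H) : N.J (N.F c ζ 0) = N.F c (N.J ζ) 0 := by
  unfold F
  have h1 := N.Jl.toContinuousLinearMap.integral_comp_comm (N.integrable_U c ζ 0)
  have h2 : ∀ ξ, N.Jl.toContinuousLinearMap ξ = N.J ξ := fun _ => rfl
  simp only [h2] at h1
  rw [← h1]
  congr 1
  funext s
  rw [N.J_smul, N.J_U, ← Complex.exp_conj]
  congr 2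
  simp

theorem cont_flow (c : ℝ) (y : H →L[ℂ] H) (ξ : H) :
    Continuous fun s : ℝ => N.U (c * s) (y (N.U (-(c * s)) ξ)) := by
  rw [continuous_iff_continuousAt]
  intro s₀
  have hg : Continuous fun s : ℝ => y (N.U (-(c * s)) ξ) :=
    y.continuous.comp ((N.U_cont ξ).comp (by fun_prop))
  rw [ContinuousAt, tendsto_iff_norm_sub_tendsto_zero]
  have hlim : Tendsto (fun s : ℝ => ‖y (N.U (-(c * s)) ξ) - y (N.U (-(c * s₀)) ξ)‖
      + ‖N.U (c * s) (y (N.U (-(c * s₀)) ξ)) - N.U (c * s₀) (y (N.U (-(c * s₀)) ξ))‖)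
      (𝓝 s₀) (𝓝 (0 + 0)) := by
    apply Tendsto.add
    · exact tendsto_iff_norm_sub_tendsto_zero.1 hg.continuousAt
    · exact tendsto_iff_norm_sub_tendsto_zero.1
        (N.U_cont' c (y (N.U (-(c * s₀)) ξ))).continuousAt
  rw [add_zero] at hlim
  refine squeeze_zero (fun _ => norm_nonneg _) (fun s => ?_) hlim
  rw [← (N.U (c * s)).norm_map (y (N.U (-(c * s)) ξ) - y (N.U (-(c * s₀)) ξ)), map_sub]
  exact norm_sub_le_norm_sub_add_norm_sub _ _ _

theorem norm_flow (t : ℝ) (y : H →L[ℂ] H) (ξ : H) :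
    ‖N.U t (y (N.U (-t) ξ))‖ ≤ ‖y‖ * ‖ξ‖ := by
  rw [LinearIsometryEquiv.norm_map]
  exact (y.le_opNorm _).trans (by simp)

theorem integrable_flow (c : ℝ) (y : H →L[ℂ] H) (ξ : H) :
    Integrable fun s : ℝ => Complex.exp (-((s : ℂ) - 0) ^ 2) •
      N.U (c * s) (y (N.U (-(c * s)) ξ)) :=
  integrable_F 0 _ (N.cont_flow c y ξ) (‖y‖ * ‖ξ‖) (fun _ => N.norm_flow _ _ _)

/-- smoothing of an operator -/
def sm (c : ℝ) (y : H →L[ℂ] H) : H →L[ℂ] H :=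
  LinearMap.mkContinuous
    { toFun := fun ξ => ∫ s : ℝ, Complex.exp (-((s : ℂ) - 0) ^ 2) •
        N.U (c * s) (y (N.U (-(c * s)) ξ))
      map_add' := fun ξ η => by
        rw [← integral_add (N.integrable_flow c y ξ) (N.integrable_flow c y η)]
        simp only [map_add, smul_add]
      map_smul' := fun a ξ => by
        simp only [RingHom.id_apply]
        rw [← integral_smul]
        simp only [map_smul]
        congr 1
        funext s
        rw [smul_comm] }
    ((∫ s : ℝ, ‖Complex.exp (-((s : ℂ) - 0) ^ 2)‖) * ‖y‖) (fun ξ => by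
      simp only [LinearMap.coe_mk, AddHom.coe_mk]
      refine (norm_integral_le_integral_norm _).trans ?_
      rw [mul_assoc, ← integral_mul_const]
      have hi : Integrable fun s : ℝ => ‖Complex.exp (-((s : ℂ) - 0) ^ 2)‖ := by
        have := integrable_F (0 : ℂ) (fun _ : ℝ => (1 : ℂ)) continuous_const 1 (by simp)
        simpa using this.norm
      refine integral_mono (N.integrable_flow c y ξ).norm (hi.mul_const _) fun s => ?_
      simp only [norm_smul]
      gcongr
      · exact N.norm_flow _ _ _)

theorem sm_apply (c : ℝ) (y : H →L[ℂ] H) (ξ : H) :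
    N.sm c y ξ = ∫ s : ℝ, Complex.exp (-((s : ℂ) - 0) ^ 2) •
        N.U (c * s) (y (N.U (-(c * s)) ξ)) := rfl

theorem sm_Ω (c : ℝ) (y : H →L[ℂ] H) : N.sm c y N.Ω = N.F c (y N.Ω) 0 := by
  rw [sm_apply, F]
  simp only [N.U_Ω]

theorem star_inner (y : H →L[ℂ] H) (v w : H) : ⟪star y v, w⟫_ℂ = ⟪v, y w⟫_ℂ := by
  rw [ContinuousLinearMap.star_eq_adjoint, ContinuousLinearMap.adjoint_inner_left]

theorem inner_star (y : H →L[ℂ] H) (v w : H) : ⟪v, star y w⟫_ℂ = ⟪y v, w⟫_ℂ := by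
  rw [ContinuousLinearMap.star_eq_adjoint, ContinuousLinearMap.adjoint_inner_right]

theorem star_sm (c : ℝ) (y : H →L[ℂ] H) : star (N.sm c y) = N.sm c (star y) := by
  ext ξ
  refine ext_inner_left ℂ fun v => ?_
  rw [inner_star, sm_apply, sm_apply, ← integral_inner (N.integrable_flow c (star y) ξ),
    ← inner_conj_symm, ← integral_inner (N.integrable_flow c y v), ← integral_conj]
  congr 1
  funext s
  rw [inner_smul_right, inner_smul_right, map_mul, inner_conj_symm, ← Complex.exp_conj]
  congr 1
  · congr 1
    simp
  · rw [U_adj, inner_star, U_adj]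
    rw [neg_neg]

theorem sm_mem (c : ℝ) (y : H →L[ℂ] H) (hy : y ∈ N.M) : N.sm c y ∈ N.M := by
  have h0 : N.M.commutant.commutant = N.M := VonNeumannAlgebra.commutant_commutant _
  rw [← h0, VonNeumannAlgebra.mem_commutant_iff]
  intro a ha
  rw [VonNeumannAlgebra.mem_commutant_iff] at ha
  ext ξ
  simp only [mul_apply_eq_comp, sm_apply]
  rw [← a.integral_comp_comm (N.integrable_flow c y ξ)]
  congr 1
  funext s
  obtain ⟨w, hw, hw'⟩ := N.flow_mem (c * s) y hy
  rw [← hw', ← hw', map_smul]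
  have := ha w hw
  congr 1
  exact (DFunLike.congr_fun this ξ).symm

theorem F_S (c : ℝ) (hc : c ≠ 0) (x : H →L[ℂ] H) (hx : x ∈ N.M) :
    N.F c (star x N.Ω) (-(Complex.I) / 2 / c) = N.F c (N.J (x N.Ω)) 0 := by
  have h := N.S_cond (N.sm c (star x)) (N.sm_mem c _ (star_mem hx))
    (fun w => N.F c (star x N.Ω) (w / c)) ?_ ?_
  · rw [star_sm, star_star, sm_Ω] at h
    have h2 := congrArg N.J h
    rwa [N.J_invol, J_F] at h2
  · exact (N.F_differentiable c _).comp (by fun_prop)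
  · intro t
    have h3 := N.F_translate c (star x N.Ω) 0 (t / c)
    rw [sm_Ω]
    rw [mul_div_cancel₀ t hc] at h3
    rw [← h3]
    simp

theorem F_C (c : ℝ) (hc : c ≠ 0) (x : H →L[ℂ] H) (hx : x ∈ N.centralizerSet) :
    N.F c (star x N.Ω) 0 = N.F c (N.J (x N.Ω)) (-(Complex.I) / 2 / c) := by
  have hp : starRingEnd ℂ (-(Complex.I) / 2 / c) = -(-(Complex.I) / 2 / c) := by
    have h2 : starRingEnd ℂ (2 : ℂ) = 2 := Complex.conj_ofNat 2
    simp [neg_div, h2]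
  have key : ∀ ζ : H, ⟪N.F c (star x N.Ω) 0, ζ⟫_ℂ
      = ⟪N.F c (N.J (x N.Ω)) (-(Complex.I) / 2 / c), ζ⟫_ℂ := by
    have hcont : (fun ζ : H => ⟪N.F c (star x N.Ω) 0, ζ⟫_ℂ)
      = fun ζ => ⟪N.F c (N.J (x N.Ω)) (-(Complex.I) / 2 / c), ζ⟫_ℂ := by
      refine Continuous.ext_on N.cyclic (by fun_prop) (by fun_prop) ?_
      rintro _ ⟨y, hy, rfl⟩
      simp only
      rw [← F_adj _ _ _ _ _ (by simp), ← F_adj _ _ _ _ _ hp]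
      have h1 := hx.2 (N.sm c y) (N.sm_mem c y hy)
      rw [← star_inner x, ← star_inner (N.sm c y) N.Ω (x N.Ω), star_sm, sm_Ω, sm_Ω] at h1
      rw [h1, ← N.J_inner, J_F, ← F_S N c hc (star y) (star_mem hy), star_star]
    exact fun ζ => congrFun hcont ζ
  exact ext_inner_right ℂ key

theorem F_ext (c : ℝ) (ξ η : H) (a b : ℂ) (h : N.F c ξ a = N.F c η b) (z : ℂ) :
    N.F c ξ (z + a) = N.F c η (z + b) := by
  have hd : Differentiable ℂ (fun z => N.F c ξ (z + a) - N.F c η (z + b)) :=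
    ((N.F_differentiable c ξ).comp (by fun_prop)).sub
      ((N.F_differentiable c η).comp (by fun_prop))
  have hr : ∀ t : ℝ, N.F c ξ (t + a) - N.F c η (t + b) = 0 := by
    intro t
    rw [add_comm _ a, add_comm _ b, F_translate, F_translate, h, sub_self]
  have han : AnalyticOnNhd ℂ (fun z => N.F c ξ (z + a) - N.F c η (z + b)) Set.univ :=
    fun z _ => hd.analyticAt z
  have hf : ∃ᶠ z in 𝓝[≠] (0 : ℂ), N.F c ξ (z + a) - N.F c η (z + b) = 0 := by
    have ht : Tendsto (fun t : ℝ => (t : ℂ)) (𝓝[≠] 0) (𝓝[≠] 0) := by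
      refine tendsto_nhdsWithin_iff.2 ⟨?_, ?_⟩
      · have := Complex.continuous_ofReal.tendsto 0
        simp only [Complex.ofReal_zero] at this
        exact this.mono_left nhdsWithin_le_nhds
      · filter_upwards [self_mem_nhdsWithin] with t ht
        simpa using ht
    refine ht.frequently ?_
    exact (Eventually.of_forall hr).frequently
  have := han.eqOn_zero_of_preconnected_of_frequently_eq_zero isPreconnected_univ
    (Set.mem_univ 0) hf (Set.mem_univ z)
  exact sub_eq_zero.1 this

theorem F_const (c : ℝ) (hc : 0 < c) (x : H →L[ℂ] H) (hx : x ∈ N.centralizerSet) (z w : ℂ) :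
    N.F c (star x N.Ω) z = N.F c (star x N.Ω) w := by
  set p : ℂ := -(Complex.I) / 2 / c with hp
  set f := N.F c (star x N.Ω) with hf
  have hper : ∀ z, f (z + Complex.I / c) = f z := by
    intro z
    have h1 := N.F_ext c _ _ p 0 (N.F_S c hc.ne' x hx.1) (z + Complex.I / c + p)
    have h2 := N.F_ext c _ _ 0 p (N.F_C c hc.ne' x hx) (z + Complex.I / c)
    have e : z + Complex.I / c + p + p = z := by rw [hp]; ring
    rw [e, add_zero] at h1
    rw [add_zero] at h2
    rw [hf, h1, h2]
  have hcont : Continuous f := (N.F_differentiable c _).continuous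
  have hT : (0:ℝ) < 1 / c := by positivity
  have hnorm : ∀ z : ℂ, ‖f z‖ = ‖f (z.im * Complex.I)‖ := by
    intro z
    have h := N.F_translate c (star x N.Ω) (z.im * Complex.I) z.re
    have e : (z.im * Complex.I + z.re : ℂ) = z := by rw [add_comm]; exact Complex.re_add_im z
    rw [e] at h
    rw [hf, h, LinearIsometryEquiv.norm_map]
  have hP : Function.Periodic (fun y : ℝ => ‖f (y * Complex.I)‖) (1 / c) := by
    intro y
    simp only
    rw [← hper (y * Complex.I)]
    congr 2
    push_cast
    ring
  have hP' := hper
  obtain ⟨C, hC⟩ := (isCompact_Icc (a := (0:ℝ)) (b := 0 + 1 / c)).exists_bound_of_continuousOn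
    (f := fun y : ℝ => f (y * Complex.I)) (by fun_prop)
  have hbd : Bornology.IsBounded (Set.range f) := by
    refine isBounded_iff_forall_norm_le.2 ⟨C, ?_⟩
    rintro _ ⟨z, rfl⟩
    rw [hnorm z]
    obtain ⟨y, hy, hy'⟩ := hP.exists_mem_Ico hT z.im 0
    refine le_of_eq_of_le hy' ?_
    exact hC y (Set.Ico_subset_Icc_self hy)
  exact (N.F_differentiable c _).apply_eq_apply_of_bounded hbd z w

theorem F_lim (ζ : H) : Tendsto (fun c : ℝ => N.F c ζ 0) (𝓝[>] 0) (𝓝 ((√Real.pi : ℂ) • ζ)) := by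
  have h0 : (√Real.pi : ℂ) • ζ = ∫ s : ℝ, Complex.exp (-((s : ℂ) - 0) ^ 2) • ζ := by
    rw [integral_smul_const]
    congr 1
    have := integral_gaussian 1
    have h2 : ∀ s : ℝ, Complex.exp (-((s : ℂ) - 0) ^ 2) = ((Real.exp (-1 * s ^ 2) : ℝ) : ℂ) := by
      intro s; push_cast; congr 1; ring
    simp_rw [h2]
    rw [integral_complex_ofReal, this]
    simp
  rw [h0]
  unfold F
  refine tendsto_integral_filter_of_dominated_convergence
    (fun s : ℝ => ‖Complex.exp (-((s : ℂ) - 0) ^ 2) • ζ‖) ?_ ?_ ?_ ?_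
  · exact Eventually.of_forall fun c => (N.integrable_U c ζ 0).aestronglyMeasurable
  · refine Eventually.of_forall fun c => Eventually.of_forall fun s => ?_
    rw [norm_smul, norm_smul, LinearIsometryEquiv.norm_map]
  · exact (integrable_F 0 (fun _ => ζ) continuous_const ‖ζ‖ (fun _ => le_rfl)).norm
  · refine Eventually.of_forall fun s => ?_
    have h1 : Continuous fun c : ℝ => N.U (c * s) ζ := (N.U_cont ζ).comp (by fun_prop)
    have h2 := h1.tendsto 0
    simp only [zero_mul, N.U_zero] at h2
    exact (h2.mono_left nhdsWithin_le_nhds).const_smul _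

theorem U_fix (x : H →L[ℂ] H) (hx : x ∈ N.centralizerSet) (t : ℝ) :
    N.U t (star x N.Ω) = star x N.Ω := by
  have h1 := N.F_lim (star x N.Ω)
  have h2 := ((N.U t).continuous.tendsto _).comp h1
  have h3 : Tendsto (fun c : ℝ => N.F c (star x N.Ω) 0) (𝓝[>] 0)
      (𝓝 (N.U t ((√Real.pi : ℂ) • star x N.Ω))) := by
    refine h2.congr' ?_
    filter_upwards [self_mem_nhdsWithin] with c hc
    have hc' : (0:ℝ) < c := hc
    have h4 := N.F_translate c (star x N.Ω) 0 (t / c)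
    rw [mul_div_cancel₀ t hc'.ne', N.F_const c hc' x hx _ 0] at h4
    simp only [Function.comp]
    exact h4.symm
  have h5 := tendsto_nhds_unique h3 h1
  rw [map_smul] at h5
  refine smul_right_injective H (r := (√Real.pi : ℂ)) ?_ h5
  exact_mod_cast (Real.sqrt_pos.2 Real.pi_pos).ne'

theorem flowFixed_star (x : H →L[ℂ] H) (hx : x ∈ N.flowFixed) : star x ∈ N.flowFixed := by
  refine ⟨star_mem hx.1, fun t ξ => ext_inner_left ℂ fun v => ?_⟩
  rw [inner_star, U_adj, U_adj, inner_star, hx.2]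

theorem flowFixed_mul (x y : H →L[ℂ] H) (hx : x ∈ N.flowFixed) (hy : y ∈ N.flowFixed) :
    x * y ∈ N.flowFixed := by
  refine ⟨mul_mem hx.1 hy.1, fun t ξ => ?_⟩
  simp only [mul_apply_eq_comp]
  rw [hy.2, hx.2]

theorem centralizer_sub : N.centralizerSet ⊆ N.flowFixed := by
  intro x hx
  rw [← star_star x]
  apply flowFixed_star
  refine ⟨star_mem hx.1, fun t ξ => ?_⟩
  obtain ⟨y, hy, hy'⟩ := N.flow_mem t (star x) (star_mem hx.1)
  have h : y - star x = 0 := by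
    refine N.separating _ (sub_mem hy (star_mem hx.1)) ?_
    rw [sub_apply, hy', N.U_Ω, N.U_fix x hx, sub_self]
  rw [sub_eq_zero] at h
  rw [← h, hy', ← N.U_add, h]
  simp [N.U_zero]

theorem flow_simp (x : H →L[ℂ] H) (hx : x ∈ N.flowFixed) (t : ℝ) (ξ : H) :
    N.U t (x (N.U (-t) ξ)) = x ξ := by
  rw [← hx.2, ← N.U_add]
  simp [N.U_zero]

theorem asymp_center (h : N.AsympAbelian) : N.flowFixed ⊆ N.centerSet := by
  intro x hx
  refine ⟨hx.1, fun y hy => ?_⟩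
  ext η
  refine ext_inner_left ℂ fun v => ?_
  have h1 := h x hx.1 y hy v η
  simp only [N.flow_simp x hx] at h1
  have h2 := tendsto_nhds_unique h1 tendsto_const_nhds
  rw [inner_sub_right] at h2
  simp only [mul_apply_eq_comp]
  exact sub_eq_zero.1 h2.symm

theorem graded_comm (h : N.GradedAsympAbelian) (x : H →L[ℂ] H) (hx : x ∈ N.flowFixed)
    (y : H →L[ℂ] H) (hy : y ∈ N.M) : x * y = N.V * y * N.V * x := by
  ext η
  refine ext_inner_left ℂ fun v => ?_
  have h1 := h x hx.1 y hy v η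
  simp only [N.flow_simp x hx] at h1
  have h2 := tendsto_nhds_unique h1 tendsto_const_nhds
  rw [inner_sub_right] at h2
  simp only [mul_apply_eq_comp]
  exact sub_eq_zero.1 h2.symm

theorem V_mem' (y : H →L[ℂ] H) (hy : y ∈ N.M) : N.V * y * N.V ∈ N.M := by
  obtain ⟨w, hw, hw'⟩ := N.V_mem y hy
  have : N.V * y * N.V = w := by
    ext ξ
    simp [hw']
  rwa [this]

theorem V_sq : N.V * N.V = 1 := by
  ext ξ
  simp [N.V_invol]

theorem VV (y : H →L[ℂ] H) : N.V * (N.V * y * N.V) * N.V = y := by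
  calc N.V * (N.V * y * N.V) * N.V = (N.V * N.V) * y * (N.V * N.V) := by noncomm_ring
    _ = y := by simp [V_sq]

theorem graded_center (h : N.GradedAsympAbelian) : N.flowFixed ⊆ N.centerSet := by
  intro x hx
  refine ⟨hx.1, fun y hy => ?_⟩
  have hs := N.flowFixed_star x hx
  have h1 := N.graded_comm h (x * star x) (N.flowFixed_mul _ _ hx hs) y hy
  have h2 := N.graded_comm h (star x) hs y hy
  have h3 := N.graded_comm h x hx _ (N.V_mem' y hy)
  rw [VV] at h3
  have h4 : (y - N.V * y * N.V) * (x * star x) = 0 := by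
    rw [sub_mul, ← h1, mul_assoc x, h2, ← mul_assoc x, h3, mul_assoc y, sub_self]
  have h5 : ((y - N.V * y * N.V) * x) * star ((y - N.V * y * N.V) * x) = 0 := by
    rw [star_mul]
    calc _ = ((y - N.V * y * N.V) * (x * star x)) * star (y - N.V * y * N.V) := by
          simp only [mul_assoc]
      _ = 0 := by rw [h4, zero_mul]
  rw [CStarRing.mul_star_self_eq_zero_iff, sub_mul, sub_eq_zero] at h5
  rw [N.graded_comm h x hx y hy, h5]

theorem center_sub : N.centerSet ⊆ N.centralizerSet := by
  intro x hx
  refine ⟨hx.1, fun y hy => ?_⟩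
  rw [← mul_apply_eq_comp, hx.2 y hy, mul_apply_eq_comp]

theorem twisted_sub : N.twistedCenter ⊆ N.centralizerSet := by
  intro x hx
  refine ⟨hx.1, fun y hy => ?_⟩
  have h1 := hx.2 N.Ω
  rw [N.J_Ω, N.V_Ω] at h1
  have h2 := N.tomita (star x) (star_mem hx.1) y hy N.Ω
  rw [N.J_Ω, h1] at h2
  rw [← h2]
  conv_rhs => rw [← N.J_Ω]
  rw [N.J_inner, star_inner, ← h1, N.J_inner, star_inner, N.J_Ω]

theorem graded_twisted (h : N.GradedAsympAbelian) : N.flowFixed ⊆ N.twistedCenter := by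
  intro x hx
  refine ⟨hx.1, ?_⟩
  have hs := N.flowFixed_star x hx
  have hJ : N.J (star x N.Ω) = x N.Ω := by
    have := N.S_cond (star x) hs.1 (fun _ => star x N.Ω) (by fun_prop)
      (fun t => by rw [← hs.2, N.U_Ω])
    rwa [star_star] at this
  have hJc : Continuous N.J := N.Jl.continuous
  have : (fun ξ => N.J (star x (N.J ξ))) = fun ξ => x (N.V ξ) := by
    refine Continuous.ext_on N.cyclic (by fun_prop) (by fun_prop) ?_
    rintro _ ⟨y, hy, rfl⟩
    simp only
    rw [N.tomita _ hs.1 y hy, N.J_Ω, hJ]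
    have h3 := N.graded_comm h x hx _ (N.V_mem' y hy)
    rw [VV] at h3
    have h4 := DFunLike.congr_fun h3 N.Ω
    simp only [mul_apply_eq_comp, N.V_Ω] at h4
    exact h4.symm
  exact fun ξ => congrFun this ξ

end GradedVN


/-- (i) If the modular flow of `(M, Ω)` is asymptotically abelian, then the
centralizer `Z_Ω(M)` equals the center `Z(M)`, and in particular `Z(M,V) ⊆ Z(M)`.
(ii) If `M` is `V`-graded asymptotically abelian, then `Z(M,V) = Z_Ω(M) ⊆ Z(M)`. -/
theorem asymptotically_abelian_twisted_center {H : Type*} [NormedAddCommGroup H]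
    [InnerProductSpace ℂ H] [CompleteSpace H] (N : GradedVN H) :
    (N.AsympAbelian →
      N.centralizerSet = N.centerSet ∧ N.twistedCenter ⊆ N.centerSet) ∧
    (N.GradedAsympAbelian →
      N.twistedCenter = N.centralizerSet ∧ N.centralizerSet ⊆ N.centerSet) := by
  refine ⟨fun h => ⟨?_, ?_⟩, fun h => ⟨?_, ?_⟩⟩
  · exact Set.Subset.antisymm (N.centralizer_sub.trans (N.asymp_center h)) N.center_sub
  · exact N.twisted_sub.trans (N.centralizer_sub.trans (N.asymp_center h))
  · exact Set.Subset.antisymm N.twisted_sub (N.centralizer_sub.trans (N.graded_twisted h))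
  · exact N.centralizer_sub.trans (N.graded_center h)

end
end

section
/- Let (M, Ω, V) be a graded von Neumann algebra. (i) If Z(M, V) ⊆ Z(M) and V|_{pH} ≠ 1_{pH} for every nonzero Ad_V-invariant central projection p ∈ Z(M)^γ, then Z(M, V) = {0}. (ii) If M is a factor, V ≠ 1, and M is either asymptotically abelian or V-graded asymptotically abelian with respect to the modular flow of Ω, then Z(M, V) = {0}. -/
open scoped InnerProductSpace ComplexOrder

noncomputable section

variable {H : Type*} [NormedAddCommGroup H] [InnerProductSpace ℂ H] [CompleteSpace H]

namespace GradedVN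

theorem aux_J_zero (N : GradedVN H) : N.J 0 = 0 := by
  have := N.J_smul 0 0
  simpa using this

theorem aux_J_norm (N : GradedVN H) (ξ : H) : ‖N.J ξ‖ = ‖ξ‖ := by
  have h := N.J_inner ξ ξ
  rw [inner_self_eq_norm_sq_to_K, inner_self_eq_norm_sq_to_K] at h
  have h2 : ‖N.J ξ‖ ^ 2 = ‖ξ‖ ^ 2 := by exact_mod_cast h
  exact (sq_eq_sq₀ (norm_nonneg _) (norm_nonneg _)).1 h2

/-- `J` as a real-linear isometry. -/
def auxJ (N : GradedVN H) : H →ₗᵢ[ℝ] H where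
  toFun := N.J
  map_add' := N.J_add
  map_smul' c ξ := by
    have := N.J_smul (c : ℂ) ξ
    simpa using this
  norm_map' := N.aux_J_norm

/-- For central elements in the twisted center, `x V = x`. -/
theorem aux_central (N : GradedVN H) {x : H →L[ℂ] H} (hx : x ∈ N.twistedCenter)
    (hc : x ∈ N.centerSet) (ξ : H) : x (N.V ξ) = x ξ := by
  obtain ⟨hxM, hx⟩ := hx
  rw [← hx]
  have hsx : star x ∈ N.M := star_mem hxM
  have hcont : Continuous fun ξ => N.J (star x (N.J ξ)) :=
    N.auxJ.continuous.comp ((star x).continuous.comp N.auxJ.continuous)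
  have := Continuous.ext_on N.cyclic hcont x.continuous (by
    rintro _ ⟨y, hy, rfl⟩
    have h1 := N.tomita (star x) hsx y hy N.Ω
    have h2 := hx N.Ω
    rw [N.V_Ω] at h2
    have h3 := congrArg (fun z : H →L[ℂ] H => z N.Ω) (hc.2 y hy)
    simp only [mul_apply_eq_comp] at h3
    simp only
    rw [h1, h2, h3])
  exact congrFun this ξ

theorem aux_ker_comm (x y : H →L[ℂ] H) [x.ker.HasOrthogonalProjection]
    (h1 : x * y = y * x) (h2 : x * star y = star y * x) :
    x.ker.starProjection * y = y * x.ker.starProjection := by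
  ext η
  simp only [mul_apply_eq_comp]
  have hmem : ∀ (y : H →L[ℂ] H), x * y = y * x → ∀ w ∈ x.ker, y w ∈ x.ker := by
    intro y h w hw
    have h3 := congrArg (fun z : H →L[ℂ] H => z w) h
    simp only [mul_apply_eq_comp] at h3
    have hw' : x w = 0 := hw
    show x (y w) = 0
    rw [h3, hw', map_zero]
  apply Submodule.eq_starProjection_of_mem_of_inner_eq_zero
  · exact hmem y h1 _ (Submodule.starProjection_apply_mem _ _)
  · intro w hw
    rw [← map_sub, ← ContinuousLinearMap.adjoint_inner_right]
    exact Submodule.starProjection_inner_eq_zero _ _ (hmem _ h2 w hw)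

theorem aux_part_one (N : GradedVN H)
    (h2 : ∀ p : H →L[ℂ] H, N.IsCentralInvProj p → p ≠ 0 → ∃ ξ, N.V (p ξ) ≠ p ξ)
    {x : H →L[ℂ] H} (hx : x ∈ N.twistedCenter) (hc : x ∈ N.centerSet) : x = 0 := by
  have hV := N.aux_central hx hc
  have : CompleteSpace x.ker := x.isClosed_ker.completeSpace_coe
  set q := x.ker.starProjection with hq
  have hqs : star q = q := isSelfAdjoint_starProjection x.ker
  have hqi : q * q = q := x.ker.isIdempotentElem_starProjection
  have hqM : q ∈ N.M := by
    rw [← N.M.commutant_commutant, VonNeumannAlgebra.mem_commutant_iff]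
    intro g hg
    refine (aux_ker_comm x g ?_ ?_).symm
    · exact VonNeumannAlgebra.mem_commutant_iff.1 hg x hx.1
    · exact VonNeumannAlgebra.mem_commutant_iff.1 (star_mem hg) x hx.1
  have hqc : ∀ y ∈ N.M, q * y = y * q := fun y hy =>
    aux_ker_comm x y (hc.2 y hy) (hc.2 _ (star_mem hy))
  have hqV : (1 - q) * N.V = 1 - q := by
    ext ξ
    have : q (N.V ξ - ξ) = N.V ξ - ξ := by
      rw [hq, Submodule.starProjection_eq_self_iff]
      show x (N.V ξ - ξ) = 0
      rw [map_sub, hV, sub_self]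
    rw [map_sub] at this
    simp only [mul_apply_eq_comp, sub_apply,
      one_apply_eq_self]
    rw [sub_eq_sub_iff_sub_eq_sub]
    exact this.symm
  have hVq : N.V * (1 - q) = 1 - q := by
    have := congrArg star hqV
    simpa [star_mul, hqs, N.V_star] using this
  have hproj : N.IsCentralInvProj (1 - q) := by
    refine ⟨⟨sub_mem (H := N.M.toStarSubalgebra) (one_mem N.M.toStarSubalgebra) hqM,
      fun y hy => ?_⟩, ?_, ?_, ?_⟩
    · rw [sub_mul, mul_sub, hqc y hy, one_mul, mul_one]
    · simp [hqs]
    · rw [sub_mul, mul_sub, mul_sub, hqi]; simp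
    · intro ξ
      have e1 := congrArg (fun z : H →L[ℂ] H => z (N.V ξ)) hVq
      have e2 := congrArg (fun z : H →L[ℂ] H => z ξ) hqV
      exact e1.trans e2
  have hp0 : 1 - q = 0 := by
    by_contra hne
    obtain ⟨ξ, hξ⟩ := h2 (1 - q) hproj hne
    exact hξ (congrArg (fun z : H →L[ℂ] H => z ξ) hVq)
  ext ξ
  have : ξ ∈ x.ker := by
    rw [← Submodule.starProjection_eq_self_iff, ← hq, ← (sub_eq_zero.1 hp0)]; rfl
  exact this

theorem aux_graded (N : GradedVN H) (h : N.GradedAsympAbelian) : N.V = 1 := by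
  have key : ∀ y ∈ N.M, N.V (y N.Ω) = y N.Ω := by
    intro y hy
    have h1 := h 1 (one_mem N.M.toStarSubalgebra) y hy (y N.Ω - N.V (y N.Ω)) N.Ω
    have hU : ∀ t ξ, N.U t (N.U (-t) ξ) = ξ := fun t ξ => by
      rw [← N.U_add, add_neg_cancel, N.U_zero]
    simp only [one_apply_eq_self, hU, N.V_Ω] at h1
    have h2 := tendsto_nhds_unique h1 tendsto_const_nhds
    rw [eq_comm, inner_self_eq_zero, sub_eq_zero] at h2
    exact h2.symm
  have := Continuous.ext_on N.cyclic N.V.continuous continuous_id (by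
    rintro _ ⟨y, hy, rfl⟩
    exact key y hy)
  ext ξ
  exact congrFun this ξ

open MeasureTheory in
theorem aux_int {k : ℝ → H} (hk : Continuous k) {C : ℝ} (hC : ∀ t, ‖k t‖ ≤ C) :
    Integrable (fun t : ℝ => Real.exp (-t ^ 2) • k t) := by
  have h0 : Integrable (fun t : ℝ => Real.exp (-1 * t ^ 2)) := integrable_exp_neg_mul_sq one_pos
  refine Integrable.mono' (h0.mul_const C) (by fun_prop) (Filter.Eventually.of_forall fun t => ?_)
  rw [norm_smul, Real.norm_eq_abs, Real.abs_exp, neg_one_mul]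
  exact mul_le_mul_of_nonneg_left (hC t) (Real.exp_pos _).le

open MeasureTheory in
theorem aux_diff {k : ℝ → H} (hk : Continuous k) {C : ℝ} (hC : ∀ t, ‖k t‖ ≤ C) :
    Differentiable ℂ (fun z : ℂ => ∫ t : ℝ, Complex.exp (-((t : ℂ) - z) ^ 2) • k t) := by
  intro z₀
  have hC0 : 0 ≤ C := (norm_nonneg _).trans (hC 0)
  set R : ℝ := ‖z₀‖ + 1 with hR
  have hE : ∀ z : ℂ, ‖z‖ ≤ R → ∀ t : ℝ, ‖Complex.exp (-((t : ℂ) - z) ^ 2)‖ ≤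
      Real.exp (R ^ 2) * Real.exp (-(1 / 2) * t ^ 2) := by
    intro z hz t
    rw [Complex.norm_exp, ← Real.exp_add]
    apply Real.exp_le_exp.2
    have h1 : (-((t : ℂ) - z) ^ 2).re = -((t - z.re) ^ 2 - z.im ^ 2) := by
      simp [pow_two]
      try ring
    have h2 : z.re ^ 2 + z.im ^ 2 ≤ R ^ 2 := by
      have : ‖z‖ ^ 2 = z.re ^ 2 + z.im ^ 2 := by
        rw [Complex.sq_norm, Complex.normSq_apply]; ring
      rw [← this]
      exact pow_le_pow_left₀ (norm_nonneg _) hz 2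
    rw [h1]
    nlinarith [sq_nonneg (t - 2 * z.re)]
  have hg : Integrable (fun t : ℝ => Real.exp (-(1 / 2) * t ^ 2)) :=
    integrable_exp_neg_mul_sq (by norm_num)
  have hg1 : Integrable (fun t : ℝ => ‖t * Real.exp (-(1 / 2) * t ^ 2)‖) :=
    (integrable_mul_exp_neg_mul_sq (by norm_num)).norm
  refine (hasDerivAt_integral_of_dominated_loc_of_deriv_le (μ := volume)
    (F := fun (z : ℂ) (t : ℝ) => Complex.exp (-((t : ℂ) - z) ^ 2) • k t)
    (F' := fun (z : ℂ) (t : ℝ) => (Complex.exp (-((t : ℂ) - z) ^ 2) * (2 * ((t : ℂ) - z))) • k t)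
    (bound := fun t => (2 * Real.exp (R ^ 2) * C) * (‖t * Real.exp (-(1 / 2) * t ^ 2)‖)
      + (2 * R * Real.exp (R ^ 2) * C) * Real.exp (-(1 / 2) * t ^ 2))
    (Metric.ball_mem_nhds z₀ one_pos) ?_ ?_ ?_ ?_ ?_ ?_).2.differentiableAt
  · refine Filter.Eventually.of_forall fun z => Continuous.aestronglyMeasurable ?_
    fun_prop
  · refine Integrable.mono' ((hg.const_mul (Real.exp (R ^ 2))).mul_const C)
      (Continuous.aestronglyMeasurable (by fun_prop)) (Filter.Eventually.of_forall fun t => ?_)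
    rw [norm_smul]
    exact mul_le_mul (hE z₀ (by simp [hR]) t) (hC t) (norm_nonneg _) (by positivity)
  · exact Continuous.aestronglyMeasurable (by fun_prop)
  · refine Filter.Eventually.of_forall fun t z hz => ?_
    have hz' : ‖z‖ ≤ R := by
      have : ‖z - z₀‖ < 1 := by simpa [dist_eq_norm] using hz
      have h3 : ‖z‖ ≤ ‖z₀‖ + ‖z - z₀‖ := by
        simpa using norm_add_le z₀ (z - z₀)
      linarith
    have h4 : ‖2 * ((t : ℂ) - z)‖ ≤ 2 * (|t| + R) := by
      rw [norm_mul]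
      have := norm_sub_le (t : ℂ) z
      rw [Complex.norm_real, Real.norm_eq_abs] at this
      simp only [Complex.norm_ofNat]
      linarith
    rw [norm_smul, norm_mul]
    calc _ ≤ (Real.exp (R ^ 2) * Real.exp (-(1 / 2) * t ^ 2)) * (2 * (|t| + R)) * C := by
          gcongr
          · exact hE z hz' t
          · exact hC t
      _ = _ := by
          rw [norm_mul, Real.norm_eq_abs, Real.norm_eq_abs, Real.abs_exp]; ring
  · exact (hg1.const_mul _).add (hg.const_mul _)
  · refine Filter.Eventually.of_forall fun t z hz => ?_
    have h5 : HasDerivAt (fun z : ℂ => -((t : ℂ) - z) ^ 2) (2 * ((t : ℂ) - z)) z := by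
      have := ((((hasDerivAt_id z).const_sub (t : ℂ))).pow 2).neg
      exact HasDerivAt.congr_deriv this (by simp)
    exact h5.cexp.smul_const (k t)

theorem aux_cont (N : GradedVN H) {a : ℝ → ℝ} (ha : Continuous a) {k : ℝ → H}
    (hk : Continuous k) : Continuous fun t => N.U (a t) (k t) := by
  rw [continuous_iff_continuousAt]
  intro t₀
  have h1 : Filter.Tendsto (fun t => N.U (a t) (k t - k t₀)) (nhds t₀) (nhds 0) := by
    rw [tendsto_zero_iff_norm_tendsto_zero]
    simp only [LinearIsometryEquiv.norm_map]
    have : Continuous fun t => ‖k t - k t₀‖ := by fun_prop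
    simpa using this.tendsto t₀
  have h2 : Filter.Tendsto (fun t => N.U (a t) (k t₀)) (nhds t₀) (nhds (N.U (a t₀) (k t₀))) :=
    ((N.U_cont (k t₀)).comp ha).tendsto t₀
  have h3 := h1.add h2
  simp only [map_sub, sub_add_cancel, zero_add] at h3
  exact h3

theorem aux_smooth_cont (N : GradedVN H) (x : H →L[ℂ] H) (r : ℝ) (ξ : H) :
    Continuous fun t : ℝ => N.U (r * t) (x (N.U (-(r * t)) ξ)) :=
  N.aux_cont (by fun_prop) (x.continuous.comp (N.aux_cont (by fun_prop) continuous_const))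

theorem aux_smooth_bd (N : GradedVN H) (x : H →L[ℂ] H) (r : ℝ) (ξ : H) (t : ℝ) :
    ‖N.U (r * t) (x (N.U (-(r * t)) ξ))‖ ≤ ‖x‖ * ‖ξ‖ := by
  rw [LinearIsometryEquiv.norm_map]
  simpa using x.le_opNorm (N.U (-(r * t)) ξ)

open MeasureTheory in
theorem aux_smooth_int (N : GradedVN H) (x : H →L[ℂ] H) (r : ℝ) (ξ : H) :
    Integrable fun t : ℝ => Real.exp (-t ^ 2) • N.U (r * t) (x (N.U (-(r * t)) ξ)) :=
  aux_int (N.aux_smooth_cont x r ξ) (N.aux_smooth_bd x r ξ)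

/-- Gaussian smoothing of `x` along the flow. -/
def auxSmooth (N : GradedVN H) (x : H →L[ℂ] H) (r : ℝ) : H →L[ℂ] H :=
  LinearMap.mkContinuous
    { toFun := fun ξ => ∫ t : ℝ, Real.exp (-t ^ 2) • N.U (r * t) (x (N.U (-(r * t)) ξ))
      map_add' := fun ξ η => by
        rw [← MeasureTheory.integral_add (N.aux_smooth_int x r ξ) (N.aux_smooth_int x r η)]
        simp only [map_add, smul_add]
      map_smul' := fun c ξ => by
        rw [RingHom.id_apply, ← MeasureTheory.integral_smul]
        simp only [map_smul]
        congr 1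
        ext t
        rw [smul_comm] }
    ((∫ t : ℝ, Real.exp (-t ^ 2)) * ‖x‖) (fun ξ => by
      rw [mul_assoc, ← MeasureTheory.integral_mul_const]
      refine MeasureTheory.norm_integral_le_of_norm_le ?_ (Filter.Eventually.of_forall fun t => ?_)
      · have := integrable_exp_neg_mul_sq one_pos
        simp only [neg_one_mul] at this
        exact this.mul_const _
      · rw [norm_smul, Real.norm_eq_abs, Real.abs_exp]
        exact mul_le_mul_of_nonneg_left (N.aux_smooth_bd x r ξ t) (Real.exp_pos _).le)

theorem auxSmooth_apply (N : GradedVN H) (x : H →L[ℂ] H) (r : ℝ) (ξ : H) :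
    N.auxSmooth x r ξ = ∫ t : ℝ, Real.exp (-t ^ 2) • N.U (r * t) (x (N.U (-(r * t)) ξ)) := rfl

theorem auxSmooth_Ω (N : GradedVN H) (x : H →L[ℂ] H) (r : ℝ) :
    N.auxSmooth x r N.Ω = ∫ t : ℝ, Real.exp (-t ^ 2) • N.U (r * t) (x N.Ω) := by
  rw [auxSmooth_apply]
  simp only [N.U_Ω]

theorem auxSmooth_mem (N : GradedVN H) {x : H →L[ℂ] H} (hx : x ∈ N.M) (r : ℝ) :
    N.auxSmooth x r ∈ N.M := by
  rw [← N.M.commutant_commutant, VonNeumannAlgebra.mem_commutant_iff]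
  intro g hg
  ext ξ
  simp only [mul_apply_eq_comp, auxSmooth_apply]
  rw [← ContinuousLinearMap.integral_comp_comm g (N.aux_smooth_int x r ξ)]
  congr 1
  ext t
  obtain ⟨y, hy, hyx⟩ := N.flow_mem (r * t) x hx
  have h := VonNeumannAlgebra.mem_commutant_iff.1 hg y hy
  have h' := congrArg (fun z : H →L[ℂ] H => z ξ) h
  simp only [mul_apply_eq_comp] at h'
  rw [← hyx, ← hyx, h', ← Complex.coe_smul, map_smul, Complex.coe_smul]

theorem aux_U_inv (N : GradedVN H) (t : ℝ) (ξ : H) : N.U t (N.U (-t) ξ) = ξ := by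
  rw [← N.U_add, add_neg_cancel, N.U_zero]

theorem aux_U_inner (N : GradedVN H) (t : ℝ) (ξ η : H) :
    ⟪N.U t ξ, η⟫_ℂ = ⟪ξ, N.U (-t) η⟫_ℂ := by
  conv_lhs => rw [← N.aux_U_inv t η]
  rw [LinearIsometryEquiv.inner_map_map]

theorem auxSmooth_star (N : GradedVN H) (x : H →L[ℂ] H) (r : ℝ) :
    star (N.auxSmooth x r) = N.auxSmooth (star x) r := by
  rw [ContinuousLinearMap.star_eq_adjoint, eq_comm, ContinuousLinearMap.eq_adjoint_iff]
  intro ξ η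
  rw [auxSmooth_apply, auxSmooth_apply, ← integral_inner (N.aux_smooth_int x r η),
    ← inner_conj_symm, ← integral_inner (N.aux_smooth_int (star x) r ξ), ← integral_conj]
  congr 1
  ext t
  rw [inner_conj_symm, ← Complex.coe_smul, ← Complex.coe_smul, inner_smul_left,
    inner_smul_right, Complex.conj_ofReal, aux_U_inner, ContinuousLinearMap.star_eq_adjoint,
    ContinuousLinearMap.adjoint_inner_left, aux_U_inner, neg_neg]

/-- The entire extension. -/
theorem aux_ident {f g : ℂ → H} (hf : Differentiable ℂ f) (hg : Differentiable ℂ g)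
    (h : ∀ s : ℝ, f s = g s) : f = g := by
  have hf' : AnalyticOnNhd ℂ f Set.univ := fun z _ => hf.analyticAt z
  have hg' : AnalyticOnNhd ℂ g Set.univ := fun z _ => hg.analyticAt z
  refine hf'.eq_of_frequently_eq hg' (z₀ := 0) ?_
  have ht : Filter.Tendsto (fun s : ℝ => (s : ℂ)) (nhdsWithin 0 {0}ᶜ) (nhdsWithin 0 {0}ᶜ) := by
    refine tendsto_nhdsWithin_of_tendsto_nhds_of_eventually_within _ ?_ ?_
    · have := Complex.continuous_ofReal.tendsto 0
      simpa using this.mono_left nhdsWithin_le_nhds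
    · filter_upwards [self_mem_nhdsWithin] with s hs
      simpa using hs
  exact ht.frequently (Filter.Eventually.of_forall h).frequently

theorem aux_periodic (N : GradedVN H) {F : ℂ → H} (hF : Differentiable ℂ F)
    (hU : ∀ s : ℝ, F s = N.U s (F 0)) (hp : F (-Complex.I / 2) = F 0) (s : ℝ) :
    N.U s (F 0) = F 0 := by
  have h1 : ∀ (s : ℝ) (z : ℂ), F (z + s) = N.U s (F z) := by
    intro s z
    refine congrFun (aux_ident (f := fun z => F (z + s)) (g := fun z => N.U s (F z))
      (hF.comp (by fun_prop)) ?_ ?_) z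
    · exact (N.U s).toContinuousLinearEquiv.differentiable.comp hF
    · intro t
      rw [← Complex.ofReal_add, hU, hU t, ← N.U_add, add_comm]
  have h2 : ∀ z, F (z + -Complex.I / 2) = F z := by
    intro z
    refine congrFun (aux_ident (f := fun z => F (z + -Complex.I / 2)) (g := F)
      (hF.comp (by fun_prop)) hF ?_) z
    intro t
    rw [add_comm, h1, hp, hU]
  have hper : Function.Periodic (fun y : ℝ => F (y * Complex.I)) (1 / 2) := by
    intro y
    simp only
    rw [← h2]
    congr 1
    push_cast
    ring
  have hcont : Continuous (fun y : ℝ => F (y * Complex.I)) := by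
    have := hF.continuous
    fun_prop
  have hb : Bornology.IsBounded (Set.range (fun y : ℝ => F (y * Complex.I))) :=
    hper.isBounded_of_continuous (by norm_num) hcont
  obtain ⟨B, hB⟩ := hb.exists_norm_le
  have hb2 : Bornology.IsBounded (Set.range F) := by
    rw [isBounded_iff_forall_norm_le]
    refine ⟨B, ?_⟩
    rintro _ ⟨z, rfl⟩
    have : z = (z.im * Complex.I) + (z.re : ℝ) := by rw [add_comm, Complex.re_add_im]
    rw [this, h1, LinearIsometryEquiv.norm_map]
    exact hB _ ⟨z.im, rfl⟩
  rw [← hU]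
  exact hF.apply_eq_apply_of_bounded hb2 _ _

theorem aux_flow_smooth (N : GradedVN H) {x : H →L[ℂ] H} (hx : x ∈ N.M)
    (h : N.J (star x N.Ω) = x N.Ω) {r : ℝ} (hr : r ≠ 0) (s : ℝ) :
    N.U s (N.auxSmooth x r N.Ω) = N.auxSmooth x r N.Ω := by
  set F : ℂ → H := fun z =>
    ∫ t : ℝ, Complex.exp (-((t : ℂ) - z / r) ^ 2) • N.U (r * t) (x N.Ω) with hFdef
  have hk : Continuous fun t : ℝ => N.U (r * t) (x N.Ω) :=
    N.aux_cont (by fun_prop) continuous_const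
  have hF : Differentiable ℂ F :=
    (aux_diff hk (C := ‖x N.Ω‖) (fun t => by simp)).comp
      (f := fun z : ℂ => z / r) (by fun_prop)
  have hcoe : ∀ (t : ℝ) (v : H), Complex.exp (-(t : ℂ) ^ 2) • v = Real.exp (-t ^ 2) • v := by
    intro t v
    rw [← Complex.coe_smul]
    push_cast
    rfl
  have hF0 : F 0 = N.auxSmooth x r N.Ω := by
    rw [auxSmooth_Ω, hFdef]
    simp only [zero_div, sub_zero, hcoe]
  have hFU : ∀ s : ℝ, F s = N.U s (F 0) := by
    intro s
    rw [hF0, auxSmooth_Ω]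
    have e1 := MeasureTheory.integral_add_right_eq_self (μ := MeasureTheory.volume)
      (fun t : ℝ => Complex.exp (-((t : ℂ) - s / r) ^ 2) • N.U (r * t) (x N.Ω)) (s / r)
    have e2 := LinearIsometry.integral_comp_comm (μ := MeasureTheory.volume)
      (N.U s).toLinearIsometry (fun t : ℝ => Real.exp (-t ^ 2) • N.U (r * t) (x N.Ω))
    simp only [LinearIsometryEquiv.coe_toLinearIsometry] at e2
    rw [← e2, hFdef]
    simp only
    rw [← e1]
    congr 1
    ext t
    have e3 : ((t + s / r : ℝ) : ℂ) - s / r = t := by push_cast; ring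
    have e4 : r * (t + s / r) = s + r * t := by field_simp; ring
    rw [e3, hcoe, e4, N.U_add, ← Complex.coe_smul, ← Complex.coe_smul, map_smul]
  have hS := N.S_cond _ (N.auxSmooth_mem hx r) F hF (fun t => by rw [hFU, hF0])
  have hJ : N.J (star (N.auxSmooth x r) N.Ω) = F 0 := by
    rw [hF0, auxSmooth_star, auxSmooth_Ω, auxSmooth_Ω]
    have e2 := LinearIsometry.integral_comp_comm (μ := MeasureTheory.volume)
      N.auxJ (fun t : ℝ => Real.exp (-t ^ 2) • N.U (r * t) (star x N.Ω))
    have e3 : ∀ v, N.auxJ v = N.J v := fun _ => rfl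
    simp only [map_smul] at e2
    simp only [e3, N.J_U, h] at e2
    exact e2.symm
  have hp : F (-Complex.I / 2) = F 0 := by
    rw [← hJ, ← hS, N.J_invol]
  rw [← hF0]
  exact N.aux_periodic hF hFU hp s

theorem aux_flow (N : GradedVN H) {x : H →L[ℂ] H} (hx : x ∈ N.M)
    (h : N.J (star x N.Ω) = x N.Ω) (s : ℝ) : N.U s (x N.Ω) = x N.Ω := by
  have hlim : Filter.Tendsto (fun n : ℕ => N.auxSmooth x (1 / ((n : ℝ) + 1)) N.Ω) Filter.atTop
      (nhds (∫ t : ℝ, Real.exp (-t ^ 2) • x N.Ω)) := by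
    simp only [auxSmooth_Ω]
    have hi := integrable_exp_neg_mul_sq one_pos
    simp only [neg_one_mul] at hi
    refine MeasureTheory.tendsto_integral_of_dominated_convergence
      (fun t : ℝ => Real.exp (-t ^ 2) * ‖x N.Ω‖) ?_ (hi.mul_const _) ?_ ?_
    · intro n
      have := N.aux_cont (a := fun t => 1 / ((n : ℝ) + 1) * t) (by fun_prop)
        (continuous_const (y := x N.Ω))
      exact Continuous.aestronglyMeasurable (by fun_prop)
    · intro n
      refine Filter.Eventually.of_forall fun t => ?_
      rw [norm_smul, Real.norm_eq_abs, Real.abs_exp, LinearIsometryEquiv.norm_map]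
    · refine Filter.Eventually.of_forall fun t => ?_
      have h1 : Filter.Tendsto (fun n : ℕ => 1 / ((n : ℝ) + 1) * t) Filter.atTop (nhds 0) := by
        simpa using (tendsto_one_div_add_atTop_nhds_zero_nat (𝕜 := ℝ)).mul_const t
      have h2 := ((N.U_cont (x N.Ω)).tendsto 0).comp h1
      rw [N.U_zero] at h2
      exact h2.const_smul (Real.exp (-t ^ 2))
  have hlim2 := ((N.U s).continuous.tendsto _).comp hlim
  have hfun : (N.U s) ∘ (fun n : ℕ => N.auxSmooth x (1 / ((n : ℝ) + 1)) N.Ω) =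
      (fun n : ℕ => N.auxSmooth x (1 / ((n : ℝ) + 1)) N.Ω) := by
    ext n
    exact N.aux_flow_smooth hx h (by positivity) s
  rw [hfun] at hlim2
  have he := tendsto_nhds_unique hlim2 hlim
  rw [integral_smul_const] at he
  have hg : (∫ t : ℝ, Real.exp (-t ^ 2)) ≠ 0 := by
    have := integral_gaussian 1
    simp only [neg_one_mul] at this
    rw [this]
    have := Real.pi_pos
    positivity
  rw [← Complex.coe_smul, map_smul] at he
  exact smul_right_injective H (Complex.ofReal_ne_zero.2 hg) he

theorem aux_abelian (N : GradedVN H)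
    (h1 : ∀ z ∈ N.centerSet, ∃ c : ℂ, z = c • (1 : H →L[ℂ] H)) (h2 : N.V ≠ 1)
    (h3 : N.AsympAbelian) {x : H →L[ℂ] H} (hx : x ∈ N.twistedCenter) : x = 0 := by
  have hfix : ∀ t, N.U t (x N.Ω) = x N.Ω := by
    have h := hx.2 N.Ω
    rw [N.V_Ω, N.J_Ω] at h
    exact N.aux_flow hx.1 h
  have hfl : ∀ t ξ, N.U t (x (N.U (-t) ξ)) = x ξ := by
    intro t ξ
    obtain ⟨y, hy, hyx⟩ := N.flow_mem t x hx.1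
    have : y - x = 0 := by
      refine N.separating _ (sub_mem (H := N.M.toStarSubalgebra) hy hx.1) ?_
      rw [sub_apply, hyx, N.U_Ω, hfix, sub_self]
    rw [← hyx, sub_eq_zero.1 this]
  have hc : x ∈ N.centerSet := by
    refine ⟨hx.1, fun y hy => ?_⟩
    ext η
    have h := h3 x hx.1 y hy (x (y η) - y (x η)) η
    simp only [hfl] at h
    have h' := tendsto_nhds_unique h tendsto_const_nhds
    rw [eq_comm, inner_self_eq_zero, sub_eq_zero] at h'
    exact h'
  obtain ⟨c, rfl⟩ := h1 x hc
  by_cases hc0 : c = 0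
  · simp [hc0]
  · exfalso
    apply h2
    ext ξ
    have := N.aux_central hx hc ξ
    simpa [hc0] using this

end GradedVN

/-- (i) If `Z(M,V) ⊆ Z(M)` and `V` restricts nontrivially to `pH` for
every nonzero `Ad_V`-invariant central projection `p`, then `Z(M,V) = {0}`.
(ii) If `M` is a factor, `V ≠ 1`, and the modular flow is asymptotically abelian or
`V`-graded asymptotically abelian, then `Z(M,V) = {0}`. -/
theorem twisted_center_vanishes {H : Type*} [NormedAddCommGroup H]
    [InnerProductSpace ℂ H] [CompleteSpace H] (N : GradedVN H) :
    ((N.twistedCenter ⊆ N.centerSet ∧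
        ∀ p : H →L[ℂ] H, N.IsCentralInvProj p → p ≠ 0 → ∃ ξ, N.V (p ξ) ≠ p ξ) →
      N.twistedCenter = {0}) ∧
    (((∀ z ∈ N.centerSet, ∃ c : ℂ, z = c • (1 : H →L[ℂ] H)) ∧ N.V ≠ 1 ∧
        (N.AsympAbelian ∨ N.GradedAsympAbelian)) →
      N.twistedCenter = {0}) := by
  have h0 : (0 : H →L[ℂ] H) ∈ N.twistedCenter := by
    refine ⟨zero_mem N.M.toStarSubalgebra, fun ξ => ?_⟩
    simpa using N.aux_J_zero
  constructor
  · rintro ⟨h1, h2⟩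
    refine Set.Subset.antisymm (fun x hx => ?_) (by simpa using h0)
    exact N.aux_part_one h2 hx (h1 hx)
  · rintro ⟨h1, h2, h3⟩
    refine Set.Subset.antisymm (fun x hx => ?_) (by simpa using h0)
    rcases h3 with h3 | h3
    · exact N.aux_abelian h1 h2 h3 hx
    · exact absurd (N.aux_graded h3) h2

end
end
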